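/- Let (M,ḡ,ū) be a static vacuum triple with ū > 0, i.e., Ric_{ḡ} = ū^{-1}∇²ū and Δū = 0. Then in static-harmonic coordinates (coordinates x_k with Δx_k + ū^{-1}∇ū·∇x_k = 0), the static vacuum system becomes a quasilinear elliptic system whose second-order part is (1/2)ḡ^{rs}∂²ḡ_{ij}/∂x_r∂x_s in the metric equation, and consequently ḡ and ū are real-analytic in such coordinates on the interior of M. -/

import Mathlib

noncomputable section

open scoped BigOperators
open MeasureTheory Filter

/-- Points of the coordinate chart `ℝⁿ`. -/
abbrev Pt (n : ℕ) := Fin n → ℝ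

/-- Partial derivative of a scalar function in the `i`-th coordinate direction. -/
def pd {n : ℕ} (i : Fin n) (f : Pt n → ℝ) (x : Pt n) : ℝ :=
  fderiv ℝ f x (Pi.single i 1)

/-- Inverse metric `g^{ij}` (pointwise matrix inverse). -/
def ginv {n : ℕ} (g : Pt n → Fin n → Fin n → ℝ) (x : Pt n) (i j : Fin n) : ℝ :=
  (Matrix.of (g x))⁻¹ i j

/-- Christoffel symbols `Γ^k_{ij}` of the metric `g`. -/
def chr {n : ℕ} (g : Pt n → Fin n → Fin n → ℝ) (x : Pt n) (k i j : Fin n) : ℝ :=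
  (1/2) * ∑ l, ginv g x k l *
    (pd i (fun y => g y j l) x + pd j (fun y => g y i l) x - pd l (fun y => g y i j) x)

/-- Covariant derivative of a covector field: `X_{i;j}`. -/
def cdCov {n : ℕ} (g : Pt n → Fin n → Fin n → ℝ) (X : Pt n → Fin n → ℝ)
    (x : Pt n) (i j : Fin n) : ℝ :=
  pd j (fun y => X y i) x - ∑ k, chr g x k i j * X x k

/-- Covariant derivative of a vector field: `X^i_{;j}`. -/
def cdVec {n : ℕ} (g : Pt n → Fin n → Fin n → ℝ) (X : Pt n → Fin n → ℝ)
    (x : Pt n) (i j : Fin n) : ℝ :=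
  pd j (fun y => X y i) x + ∑ k, chr g x i k j * X x k

/-- Covariant derivative of a symmetric (0,2)-tensor: `h_{ij;k}`. -/
def cd2 {n : ℕ} (g : Pt n → Fin n → Fin n → ℝ) (h : Pt n → Fin n → Fin n → ℝ)
    (x : Pt n) (i j k : Fin n) : ℝ :=
  pd k (fun y => h y i j) x - ∑ l, chr g x l i k * h x l j - ∑ l, chr g x l j k * h x i l

/-- Second covariant derivative of a covector field: `X_{i;jk}`. -/
def cdCov2 {n : ℕ} (g : Pt n → Fin n → Fin n → ℝ) (X : Pt n → Fin n → ℝ)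
    (x : Pt n) (i j k : Fin n) : ℝ :=
  cd2 g (fun y a b => cdCov g X y a b) x i j k

/-- Riemann curvature tensor `R^l_{ijk}`. -/
def riem {n : ℕ} (g : Pt n → Fin n → Fin n → ℝ) (x : Pt n) (l i j k : Fin n) : ℝ :=
  pd j (fun y => chr g y l i k) x - pd k (fun y => chr g y l i j) x
  + ∑ m, chr g x l m j * chr g x m i k - ∑ m, chr g x l m k * chr g x m i j

/-- Riemann curvature with all indices lowered. -/
def riemLow {n : ℕ} (g : Pt n → Fin n → Fin n → ℝ) (x : Pt n) (a b c d : Fin n) : ℝ :=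
  ∑ l, g x a l * riem g x l b c d

/-- Ricci curvature `R_{ij}`. -/
def ric {n : ℕ} (g : Pt n → Fin n → Fin n → ℝ) (x : Pt n) (i j : Fin n) : ℝ :=
  ∑ l, riem g x l i l j

/-- Lower the index of a vector field using `g`. -/
def lowerV {n : ℕ} (g : Pt n → Fin n → Fin n → ℝ) (X : Pt n → Fin n → ℝ)
    (x : Pt n) (i : Fin n) : ℝ :=
  ∑ j, g x i j * X x j

/-- Lie derivative of the metric `g` along the vector field `X`:
`(L_X g)_{ij} = X_{i;j} + X_{j;i}` (index lowered by `g`). -/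
def lieg {n : ℕ} (g : Pt n → Fin n → Fin n → ℝ) (X : Pt n → Fin n → ℝ)
    (x : Pt n) (i j : Fin n) : ℝ :=
  cdCov g (lowerV g X) x i j + cdCov g (lowerV g X) x j i

/-- Hessian `f_{;ij}`. -/
def hess {n : ℕ} (g : Pt n → Fin n → Fin n → ℝ) (f : Pt n → ℝ)
    (x : Pt n) (i j : Fin n) : ℝ :=
  cdCov g (fun y a => pd a f y) x i j

/-- Laplace–Beltrami operator on functions. -/
def lapf {n : ℕ} (g : Pt n → Fin n → Fin n → ℝ) (f : Pt n → ℝ) (x : Pt n) : ℝ :=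
  ∑ i, ∑ j, ginv g x i j * hess g f x i j

/-- Trace of a (0,2)-tensor with respect to `g`. -/
def trT {n : ℕ} (g : Pt n → Fin n → Fin n → ℝ) (h : Pt n → Fin n → Fin n → ℝ)
    (x : Pt n) : ℝ :=
  ∑ i, ∑ j, ginv g x i j * h x i j

/-- Divergence of a (0,2)-tensor, as a covector. -/
def divT {n : ℕ} (g : Pt n → Fin n → Fin n → ℝ) (h : Pt n → Fin n → Fin n → ℝ)
    (x : Pt n) (i : Fin n) : ℝ :=
  ∑ j, ∑ k, ginv g x j k * cd2 g h x i j k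

/-- Bianchi operator `β_g h = -div_g h + (1/2) d (tr_g h)`. -/
def bianchi {n : ℕ} (g : Pt n → Fin n → Fin n → ℝ) (h : Pt n → Fin n → Fin n → ℝ)
    (x : Pt n) (i : Fin n) : ℝ :=
  -divT g h x i + (1/2) * pd i (fun y => trT g h y) x

/-- Gradient vector field `(∇f)^i`. -/
def gradV {n : ℕ} (g : Pt n → Fin n → Fin n → ℝ) (f : Pt n → ℝ)
    (x : Pt n) (i : Fin n) : ℝ :=
  ∑ j, ginv g x i j * pd j f x

/-- The tensor is symmetric. -/
def symT {n : ℕ} (g : Pt n → Fin n → Fin n → ℝ) : Prop :=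
  ∀ x i j, g x i j = g x j i

/-- `g` is pointwise positive definite. -/
def posdef {n : ℕ} (g : Pt n → Fin n → Fin n → ℝ) : Prop :=
  ∀ (x : Pt n) (v : Fin n → ℝ), v ≠ 0 → 0 < ∑ i, ∑ j, g x i j * v i * v j

/-- Smooth componentwise. -/
def smoothT {n : ℕ} (g : Pt n → Fin n → Fin n → ℝ) : Prop :=
  ∀ i j, ContDiff ℝ (⊤ : ℕ∞) (fun x => g x i j)

/-- The lowered tensor `(T_h)_{ijk} = (1/2)(h_{ij;k} + h_{ik;j} - h_{jk;i})`. -/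
def Tlow {n : ℕ} (g : Pt n → Fin n → Fin n → ℝ) (h : Pt n → Fin n → Fin n → ℝ)
    (x : Pt n) (i j k : Fin n) : ℝ :=
  (1/2) * (cd2 g h x i j k + cd2 g h x i k j - cd2 g h x j k i)

/-- Second partial derivatives. -/
def pd2 {n : ℕ} (i j : Fin n) (f : Pt n → ℝ) (x : Pt n) : ℝ :=
  pd i (fun y => pd j f y) x


/-- smoothness abbreviation -/
abbrev Sm {n : ℕ} (f : Pt n → ℝ) : Prop := ContDiff ℝ (⊤ : ℕ∞) f

theorem Sm.pd {n : ℕ} {f : Pt n → ℝ} (hf : Sm f) (i : Fin n) : Sm (pd i f) := by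
  have : Sm (fun x => fderiv ℝ f x (Pi.single i 1)) := by
    have h := hf.fderiv_right (m := (⊤ : ℕ∞)) (by simp)
    exact h.clm_apply contDiff_const
  exact this

theorem Sm.diff {n : ℕ} {f : Pt n → ℝ} (hf : Sm f) : Differentiable ℝ f :=
  hf.differentiable (by simp)

theorem fderiv_eq_pd {n : ℕ} {f : Pt n → ℝ} (x v : Pt n) :
    fderiv ℝ f x v = ∑ r, v r * pd r f x := by
  conv_lhs => rw [pi_eq_sum_univ' v]
  simp [map_sum, pd]
  

theorem hasDerivAt_line {n : ℕ} {f : Pt n → ℝ} (hf : Sm f) (x v : Pt n) (s : ℝ) :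
    HasDerivAt (fun s : ℝ => f (x + s • v)) (∑ r, v r * pd r f (x + s • v)) s := by
  have h1 : HasDerivAt (fun s : ℝ => x + s • v) v s := by
    simpa using ((hasDerivAt_id s).smul_const v).const_add x
  have h2 := (hf.diff (x + s • v)).hasFDerivAt.comp_hasDerivAt s h1
  rw [fderiv_eq_pd] at h2
  exact h2

theorem snd_test {H H1 : ℝ → ℝ} {c : ℝ} (h1 : ∀ s, HasDerivAt H (H1 s) s)
    (h2 : HasDerivAt H1 c 0) (hm : IsLocalMax H 0) : c ≤ 0 := by
  by_contra hc
  push Not at hc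
  have e1 : deriv H = H1 := funext fun s => (h1 s).deriv
  have hmin : IsLocalMin H 0 := by
    apply isLocalMin_of_deriv_deriv_pos
    · rw [e1, h2.deriv]; exact hc
    · exact hm.deriv_eq_zero
    · exact (h1 0).continuousAt
  have hconst : H =ᶠ[nhds 0] fun _ => H 0 := by
    filter_upwards [hm, hmin] with s a b using le_antisymm a b
  have h3 : deriv H =ᶠ[nhds 0] fun _ => 0 := by
    have := hconst.deriv
    simpa using this
  rw [e1] at h3
  have := h3.deriv_eq
  rw [h2.deriv] at this
  simp at this
  linarith

/-- second directional test -/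
theorem dir_test {n : ℕ} {v : Pt n → ℝ} (hv : Sm v) (x y ζ η : Pt n) (c1 c2 : ℝ)
    (h : ∀ᶠ s : ℝ in nhds 0, v (x + s • ζ) - v (y + s • η) ≤ v x - v y + c1 * s + c2 * s ^ 2) :
    (∑ r, ∑ s, ζ r * ζ s * pd r (pd s v) x) - (∑ r, ∑ s, η r * η s * pd r (pd s v) y)
      ≤ 2 * c2 := by
  have key : ∀ (x ζ : Pt n), HasDerivAt (fun s : ℝ => ∑ r, ζ r * pd r v (x + s • ζ))
      (∑ r, ∑ s, ζ r * ζ s * pd r (pd s v) x) 0 := by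
    intro x ζ
    have : HasDerivAt (fun s : ℝ => ∑ r, ζ r * pd r v (x + s • ζ))
      (∑ s, ζ s * ∑ r, ζ r * pd r (pd s v) (x + (0:ℝ) • ζ)) 0 := by
      apply HasDerivAt.fun_sum
      intro i _
      exact (hasDerivAt_line (hv.pd i) x ζ 0).const_mul (ζ i)
    convert this using 1
    rw [Finset.sum_comm]
    simp only [Finset.mul_sum, zero_smul, add_zero]
    refine Finset.sum_congr rfl fun _ _ => Finset.sum_congr rfl fun _ _ => by ring
  have hq : ∀ s : ℝ, HasDerivAt (fun s : ℝ => v x - v y + c1 * s + c2 * s ^ 2)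
      (c1 + 2 * c2 * s) s := by
    intro s
    have a1 := (hasDerivAt_id s).const_mul c1
    have a2 := ((hasDerivAt_id s).pow 2).const_mul c2
    have := (a1.const_add (v x - v y)).add a2
    refine HasDerivAt.congr_deriv this ?_
    simp only [id, Nat.cast_ofNat]; ring
  have hq2 : HasDerivAt (fun s : ℝ => c1 + 2 * c2 * s) (2 * c2) 0 := by
    simpa using ((hasDerivAt_id (0:ℝ)).const_mul (2*c2)).const_add c1
  have := snd_test
    (fun s => ((hasDerivAt_line hv x ζ s).sub (hasDerivAt_line hv y η s)).sub (hq s))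
    (((key x ζ).sub (key y η)).sub hq2) (by
      filter_upwards [h] with s hs
      simp only [Pi.sub_apply]
      simp
      linarith)
  linarith

theorem psd_pair {n : ℕ} (T : Matrix (Fin n) (Fin n) ℝ) (hT : ∀ r s, T r s = T s r)
    (hpos : ∀ ξ : Fin n → ℝ, 0 ≤ ∑ r, ∑ s, T r s * ξ r * ξ s) (X : Fin n → Fin n → ℝ) (c : ℝ)
    (hX : ∀ ζ : Fin n → ℝ, ∑ r, ∑ s, ζ r * ζ s * X r s ≤ c * ∑ r, ζ r ^ 2) :
    ∑ r, ∑ s, T r s * X r s ≤ c * ∑ r, T r r := by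
  have hp : T.PosSemidef := by
    refine Matrix.PosSemidef.of_dotProduct_mulVec_nonneg ?_ ?_
    · ext r s; simp [hT r s]
    · intro ξ
      have := hpos ξ
      simp only [dotProduct, Matrix.mulVec, Finset.mul_sum]
      refine this.trans_eq (Finset.sum_congr rfl fun r _ => Finset.sum_congr rfl fun s _ => ?_)
      simp only [star_trivial]; ring
  obtain ⟨B, hB⟩ : ∃ B : Matrix (Fin n) (Fin n) ℝ, T = B.conjTranspose * B := by
    open scoped MatrixOrder in
    exact CStarAlgebra.nonneg_iff_eq_star_mul_self.mp hp.nonneg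
  have hTe : ∀ r s, T r s = ∑ k, B k r * B k s := by
    intro r s; rw [hB]; simp [Matrix.mul_apply]
  calc ∑ r, ∑ s, T r s * X r s = ∑ k, ∑ r, ∑ s, B k r * B k s * X r s := by
        simp only [hTe, Finset.sum_mul]
        symm
        rw [Finset.sum_comm]
        exact Finset.sum_congr rfl fun r _ => Finset.sum_comm
    _ ≤ ∑ k, c * ∑ r, B k r ^ 2 := Finset.sum_le_sum fun k _ => hX (B k)
    _ = c * ∑ r, T r r := by
        rw [← Finset.mul_sum, Finset.sum_comm]
        simp only [hTe]
        congr 1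
        exact Finset.sum_congr rfl fun _ _ => Finset.sum_congr rfl fun _ _ => by ring


/-- Euclidean norm on `Pt n`. -/
noncomputable def en {n : ℕ} (v : Pt n) : ℝ := ‖(WithLp.toLp 2 v : EuclideanSpace ℝ (Fin n))‖

theorem en_nonneg {n : ℕ} (v : Pt n) : 0 ≤ en v := norm_nonneg _

theorem en_sq {n : ℕ} (v : Pt n) : en v ^ 2 = ∑ r, v r ^ 2 := by
  simp [en, EuclideanSpace.norm_sq_eq]

theorem en_add_le {n : ℕ} (v w : Pt n) : en (v + w) ≤ en v + en w := by
  unfold en; rw [WithLp.toLp_add]; exact norm_add_le _ _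

theorem en_neg {n : ℕ} (v : Pt n) : en (-v) = en v := by
  unfold en; rw [WithLp.toLp_neg]; exact norm_neg _

theorem en_smul {n : ℕ} (c : ℝ) (v : Pt n) : en (c • v) = |c| * en v := by
  unfold en; rw [WithLp.toLp_smul, norm_smul, Real.norm_eq_abs]

theorem en_sub_comm {n : ℕ} (v w : Pt n) : en (v - w) = en (w - v) := by
  rw [← en_neg, neg_sub]

theorem en_zero {n : ℕ} : en (0 : Pt n) = 0 := by simp [en]

theorem en_eq_zero {n : ℕ} {v : Pt n} (h : en v = 0) : v = 0 := by
  unfold en at h; rw [norm_eq_zero] at h; simpa using h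

theorem en_continuous {n : ℕ} : Continuous (en (n := n)) := by
  unfold en
  exact (PiLp.continuous_toLp 2 _).norm

theorem en_tri {n : ℕ} (x y z : Pt n) : en (x - z) ≤ en (x - y) + en (y - z) := by
  have := en_add_le (x - y) (y - z)
  simpa using this

theorem abs_le_en {n : ℕ} (v : Pt n) (i : Fin n) : |v i| ≤ en v := by
  apply abs_le_of_sq_le_sq _ (en_nonneg v)
  rw [en_sq]
  exact Finset.single_le_sum (f := fun r => v r ^ 2) (fun _ _ => sq_nonneg _) (Finset.mem_univ i)

theorem en_line {n : ℕ} (z ζ : Pt n) (s : ℝ) :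
    en (z + s • ζ) ^ 2 = en z ^ 2 + 2 * s * (∑ r, z r * ζ r) + s ^ 2 * ∑ r, ζ r ^ 2 := by
  simp only [en_sq, Finset.mul_sum, ← Finset.sum_add_distrib]
  refine Finset.sum_congr rfl fun r _ => ?_
  simp; ring

theorem isCompact_eball {n : ℕ} (x0 : Pt n) (δ : ℝ) : IsCompact {x : Pt n | en (x - x0) ≤ δ} := by
  apply Metric.isCompact_of_isClosed_isBounded
  · exact isClosed_le (en_continuous.comp (continuous_id.sub continuous_const)) continuous_const
  · refine (Metric.isBounded_closedBall (x := x0) (r := δ)).subset fun x hx => ?_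
    have hx' : en (x - x0) ≤ δ := hx
    rw [Metric.mem_closedBall, dist_pi_le_iff ((en_nonneg _).trans hx')]
    intro i
    rw [Real.dist_eq]
    exact (abs_le_en (x - x0) i).trans hx'

set_option maxHeartbeats 1600000 in
/-- doubling of variables -/
theorem doubling {n : ℕ} (a : Pt n → Matrix (Fin n) (Fin n) ℝ) (v : Pt n → ℝ) (hv : Sm v)
    (x0 : Pt n) (δ lam Θ K F M A : ℝ) (hδ : 0 < δ) (hlam : 0 < lam) (hK : 0 ≤ K) (hF : 0 ≤ F)
    (hM : 0 ≤ M)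
    (hsym : ∀ x r s, a x r s = a x s r)
    (hell : ∀ x, en (x - x0) ≤ δ → ∀ ξ : Fin n → ℝ,
      lam * ∑ r, ξ r ^ 2 ≤ ∑ r, ∑ s, a x r s * ξ r * ξ s)
    (htr : ∀ x, en (x - x0) ≤ δ → ∑ r, a x r r ≤ Θ) (hlT : lam ≤ Θ)
    (hlip : ∀ x y, en (x - x0) ≤ δ → en (y - x0) ≤ δ → ∀ ξ : Fin n → ℝ,
      |∑ r, ∑ s, (a y r s - a x r s) * ξ r * ξ s| ≤ K * en (x - y) * ∑ r, ξ r ^ 2)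
    (hs1 : 4 * K * δ ≤ lam) (hs2 : 12 * n * K * δ ≤ lam)
    (hvM : ∀ x, en (x - x0) ≤ δ → |v x| ≤ M)
    (hvF : ∀ x, en (x - x0) ≤ δ → |∑ r, ∑ s, a x r s * pd r (pd s v) x| ≤ F)
    (hA : 4 * δ / lam * (2 * F + 5 * Θ * (2 * M / δ ^ 2)) < A)
    (x1 y1 : Pt n) (hx1 : en (x1 - x0) ≤ δ) (hy1 : en (y1 - x0) ≤ δ) :
    v x1 - v y1 ≤ A * (en (x1 - y1) - en (x1 - y1) ^ 2 / (8 * δ)) +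
      2 * M / δ ^ 2 * (en (x1 - x0) ^ 2 + en (y1 - x0) ^ 2) := by
  by_contra hcon
  push Not at hcon
  set B := 2 * M / δ ^ 2 with hB
  have hB0 : 0 ≤ B := by positivity
  have hBδ : B * δ ^ 2 = 2 * M := by rw [hB]; field_simp
  have hΘ : 0 < Θ := hlam.trans_le hlT
  have hA0 : 0 < A := lt_of_le_of_lt (by positivity) hA
  set φ : ℝ → ℝ := fun t => t - t ^ 2 / (8 * δ) with hφ
  set w : Pt n × Pt n → ℝ := fun p => v p.1 - v p.2 - A * φ (en (p.1 - p.2)) -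
    B * (en (p.1 - x0) ^ 2 + en (p.2 - x0) ^ 2) with hw
  have hc : IsCompact ({x : Pt n | en (x - x0) ≤ δ} ×ˢ {x : Pt n | en (x - x0) ≤ δ}) :=
    (isCompact_eball x0 δ).prod (isCompact_eball x0 δ)
  have hvc : Continuous v := hv.continuous
  have hec := en_continuous (n := n)
  have hwc : Continuous w := by
    rw [hw, hφ]
    fun_prop
  obtain ⟨⟨x, y⟩, ⟨hx, hy⟩, hmax⟩ := hc.exists_isMaxOn ⟨(x1, y1), hx1, hy1⟩ hwc.continuousOn
  simp only [Set.mem_ofPred_eq] at hx hy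
  have hwpos : 0 < w (x, y) := by
    have h1 : w (x1, y1) ≤ w (x, y) := hmax (show (x1, y1) ∈ _ from ⟨hx1, hy1⟩)
    have h2 : 0 < w (x1, y1) := by simp only [hw, hφ]; linarith
    linarith
  have hφ0 : ∀ t, 0 ≤ t → t ≤ 2 * δ → 0 ≤ φ t := by
    intro t h0 h1
    simp only [hφ]
    have : t ^ 2 / (8 * δ) ≤ t := by
      rw [div_le_iff₀ (by positivity)]; nlinarith
    linarith
  set t := en (x - y) with ht
  have ht0 : 0 ≤ t := en_nonneg _
  have ht2 : t ≤ 2 * δ := by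
    have := en_tri x x0 y
    rw [en_sub_comm x0 y] at this
    linarith
  have hAφ : 0 ≤ A * φ t := mul_nonneg hA0.le (hφ0 t ht0 ht2)
  have hwe : w (x, y) = v x - v y - A * φ t - B * (en (x - x0) ^ 2 + en (y - x0) ^ 2) := rfl
  have htpos : 0 < t := by
    rcases ht0.lt_or_eq with h | h
    · exact h
    · exfalso
      have hxy : x = y := sub_eq_zero.1 (en_eq_zero h.symm)
      have : 0 ≤ B * (en (x - x0) ^ 2 + en (y - x0) ^ 2) := by positivity
      rw [hwe] at hwpos
      rw [hxy] at hwpos this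
      linarith
  have hvx := abs_le.1 (hvM x hx)
  have hvy := abs_le.1 (hvM y hy)
  have hxi : en (x - x0) < δ := by
    refine lt_of_le_of_ne hx fun h => ?_
    have : 0 ≤ B * en (y - x0) ^ 2 := by positivity
    rw [hwe, mul_add, h, hBδ] at hwpos
    linarith
  have hyi : en (y - x0) < δ := by
    refine lt_of_le_of_ne hy fun h => ?_
    have : 0 ≤ B * en (x - x0) ^ 2 := by positivity
    rw [hwe, mul_add, h, hBδ] at hwpos
    linarith
  have hev : ∀ (x ζ : Pt n), en (x - x0) < δ → ∀ᶠ s : ℝ in nhds 0, en (x + s • ζ - x0) ≤ δ := by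
    intro x ζ h
    have : Continuous fun s : ℝ => en (x + s • ζ - x0) := by fun_prop
    have h2 := this.continuousAt (x := 0)
    have h3 : (fun s : ℝ => en (x + s • ζ - x0)) 0 < δ := by simpa using h
    exact (h2.eventually (gt_mem_nhds h3)).mono fun s hs => hs.le
  -- the core test
  have core : ∀ (ζ η : Pt n) (c1 c2 : ℝ),
      (∀ᶠ s : ℝ in nhds 0, φ (en (x - y + s • (ζ - η))) - φ t ≤ c1 * s + c2 * s ^ 2) →
      (∑ r, ∑ s, ζ r * ζ s * pd r (pd s v) x) - (∑ r, ∑ s, η r * η s * pd r (pd s v) y)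
        ≤ 2 * (A * c2 + B * (∑ r, ζ r ^ 2 + ∑ r, η r ^ 2)) := by
    intro ζ η c1 c2 h
    refine dir_test hv x y ζ η
      (A * c1 + B * (2 * (∑ r, (x - x0) r * ζ r) + 2 * (∑ r, (y - x0) r * η r))) _ ?_
    filter_upwards [h, hev x ζ hxi, hev y η hyi] with s h1 h2 h3
    have h4 : w (x + s • ζ, y + s • η) ≤ w (x, y) := hmax (show (_, _) ∈ _ from ⟨h2, h3⟩)
    simp only [hw] at h4
    have e1 : x + s • ζ - x0 = (x - x0) + s • ζ := by abel
    have e2 : y + s • η - x0 = (y - x0) + s • η := by abel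
    have e3 : x + s • ζ - (y + s • η) = x - y + s • (ζ - η) := by rw [smul_sub]; abel
    rw [e1, e2, e3, en_line, en_line, ← ht] at h4
    have h5 := mul_le_mul_of_nonneg_left h1 hA0.le
    linarith
  -- test (i)
  have T1 : ∀ ζ : Pt n, ∑ r, ∑ s, ζ r * ζ s * (pd r (pd s v) x - pd r (pd s v) y)
      ≤ 4 * B * ∑ r, ζ r ^ 2 := by
    intro ζ
    have := core ζ ζ 0 0 (by simp [ht])
    simp only [mul_sub, Finset.sum_sub_distrib]
    linarith
  -- the unit vector
  set e : Pt n := t⁻¹ • (x - y) with he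
  have hee : ∑ r, e r ^ 2 = 1 := by
    rw [← en_sq, he, en_smul, ← ht, abs_of_pos (inv_pos.2 htpos), inv_mul_cancel₀ htpos.ne', one_pow]
  have T2 : ∑ r, ∑ s, e r * e s * (pd r (pd s v) x - pd r (pd s v) y) ≤ - A / δ + 4 * B := by
    have h0 : ∀ᶠ s : ℝ in nhds 0, -(t/2) < s := lt_mem_nhds (by linarith)
    have := core e (-e) (2 - t / (2 * δ)) (- 1 / (2 * δ)) (by
      filter_upwards [h0] with s hs
      have : x - y + s • (e - -e) = (1 + 2 * s * t⁻¹) • (x - y) := by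
        rw [he, sub_neg_eq_add, ← two_smul ℝ, smul_smul, smul_smul, add_smul, one_smul]
        congr 2
        ring
      rw [this, en_smul, ← ht]
      have h1 : |1 + 2 * s * t⁻¹| * t = t + 2 * s := by
        have : (1 + 2 * s * t⁻¹) * t = t + 2 * s := by field_simp
        rw [← this, abs_of_pos]
        have h2 : 1 + 2 * s * t⁻¹ = (t + 2 * s) / t := by field_simp
        rw [h2]
        exact div_pos (by linarith) htpos
      rw [h1]
      simp only [hφ]
      apply le_of_eq
      field_simp
      ring)
    have h2 : ∑ r, (-e) r ^ 2 = 1 := by simpa using hee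
    rw [hee, h2] at this
    simp only [mul_sub, Finset.sum_sub_distrib]
    simp only [Pi.neg_apply, neg_mul_neg] at this
    refine this.trans (le_of_eq ?_)
    field_simp
    ring
  have aux : ∀ ζ : Pt n, ∃ c1 : ℝ, ∀ s : ℝ, φ (en (x - y + s • ζ)) - φ t ≤
      c1 * s + ((1 - t / (4 * δ)) * (∑ r, ζ r ^ 2) / (2 * t)) * s ^ 2 := by
    intro ζ
    refine ⟨(1 - t / (4 * δ)) * (∑ r, (x - y) r * ζ r) / t, fun s => ?_⟩
    have h1 := en_line (x - y) ζ s
    rw [← ht] at h1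
    set τ := en (x - y + s • ζ)
    set Q := ∑ r, ζ r ^ 2
    set P := ∑ r, (x - y) r * ζ r
    have h2 : τ - t ≤ (2 * s * P + s ^ 2 * Q) / (2 * t) := by
      rw [le_div_iff₀ (by positivity)]
      have := sq_nonneg (τ - t)
      linarith
    have h3 : 0 ≤ 1 - t / (4 * δ) := by
      rw [sub_nonneg, div_le_one (by positivity)]; linarith
    have h4 : φ τ - φ t = (τ - t) * (1 - t / (4 * δ)) - (τ - t) ^ 2 / (8 * δ) := by
      simp only [hφ]; field_simp; ring
    have h5 : 0 ≤ (τ - t) ^ 2 / (8 * δ) := by positivity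
    have h6 := mul_le_mul_of_nonneg_right h2 h3
    have h7 : (2 * s * P + s ^ 2 * Q) / (2 * t) * (1 - t / (4 * δ)) =
      (1 - t / (4 * δ)) * P / t * s + ((1 - t / (4 * δ)) * Q / (2 * t)) * s ^ 2 := by
      field_simp
    linarith
  have hAt : ∀ Q : ℝ, 0 ≤ Q → 2 * (A * ((1 - t / (4 * δ)) * Q / (2 * t)) + B * Q) ≤
      (A / t + 2 * B) * Q := by
    intro Q hQ
    have : 2 * (A * ((1 - t / (4 * δ)) * Q / (2 * t)) + B * Q) =
      (A / t + 2 * B) * Q - A * Q / (4 * δ) := by field_simp; ring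
    rw [this]
    have : 0 ≤ A * Q / (4 * δ) := by positivity
    linarith
  have T3 : ∀ ζ : Pt n, ∑ r, ∑ s, ζ r * ζ s * pd r (pd s v) x ≤ (A / t + 2 * B) * ∑ r, ζ r ^ 2 := by
    intro ζ
    obtain ⟨c1, h⟩ := aux ζ
    have := core ζ 0 c1 _ (Eventually.of_forall (by simpa using h))
    simp only [Pi.zero_apply, zero_mul, Finset.sum_const_zero, sub_zero, ne_eq, OfNat.ofNat_ne_zero,
      not_false_eq_true, zero_pow, add_zero] at this
    exact this.trans (hAt _ (Finset.sum_nonneg fun _ _ => sq_nonneg _))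
  have T4 : ∀ ζ : Pt n, ∑ r, ∑ s, ζ r * ζ s * (- pd r (pd s v) y) ≤
      (A / t + 2 * B) * ∑ r, ζ r ^ 2 := by
    intro ζ
    obtain ⟨c1, h⟩ := aux (-ζ)
    have := core 0 ζ c1 _ (Eventually.of_forall (by simpa using h))
    simp only [Pi.zero_apply, zero_mul, Finset.sum_const_zero, zero_sub, ne_eq, OfNat.ofNat_ne_zero,
      not_false_eq_true, zero_pow, zero_add] at this
    simp only [mul_neg, Finset.sum_neg_distrib]
    exact this.trans (hAt _ (Finset.sum_nonneg fun _ _ => sq_nonneg _))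
  have hdiag : ∀ (c : ℝ) (ξ : Pt n), ∑ r, ∑ s, (if r = s then c else 0) * ξ r * ξ s =
      c * ∑ r, ξ r ^ 2 := by
    intro c ξ
    simp only [ite_mul, zero_mul, Finset.sum_ite_eq, Finset.mem_univ, if_true, Finset.mul_sum]
    exact Finset.sum_congr rfl fun _ _ => by ring
  have hKt : K * t ≤ lam / 2 := by
    have := mul_le_mul_of_nonneg_left ht2 hK
    linarith
  -- matrix (i)
  have P1 := psd_pair (Matrix.of fun r s => a x r s - (if r = s then K * t else 0)
      - lam / 2 * (e r * e s))
    (by intro r s; simp only [Matrix.of_apply, hsym x r s, eq_comm (a := r)]; ring)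
    (by
      intro ξ
      simp only [Matrix.of_apply, sub_mul, Finset.sum_sub_distrib, hdiag]
      have h1 := hell x hx ξ
      have h2 : ∑ r, ∑ s, lam / 2 * (e r * e s) * ξ r * ξ s = lam / 2 * (∑ r, e r * ξ r) ^ 2 := by
        rw [sq, Finset.sum_mul_sum, Finset.mul_sum]
        refine Finset.sum_congr rfl fun _ _ => ?_
        rw [Finset.mul_sum]
        exact Finset.sum_congr rfl fun _ _ => by ring
      have h3 := Finset.sum_mul_sq_le_sq_mul_sq Finset.univ e ξ
      rw [hee, one_mul] at h3
      rw [h2]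
      have h4 : 0 ≤ ∑ r, ξ r ^ 2 := Finset.sum_nonneg fun _ _ => sq_nonneg _
      have h5 := mul_le_mul_of_nonneg_right hKt h4
      have h6 := mul_le_mul_of_nonneg_left h3 (by positivity : 0 ≤ lam / 2)
      linarith)
    (fun r s => pd r (pd s v) x - pd r (pd s v) y) _ T1
  have P3 := psd_pair (Matrix.of fun r s => if r = s then K * t else 0)
    (by intro r s; simp only [Matrix.of_apply, eq_comm (a := r)])
    (by
      intro ξ
      simp only [Matrix.of_apply, hdiag]
      positivity)
    (fun r s => pd r (pd s v) x) _ T3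
  have P4 := psd_pair (Matrix.of fun r s => a y r s - a x r s + if r = s then K * t else 0)
    (by intro r s; simp only [Matrix.of_apply, hsym x r s, hsym y r s, eq_comm (a := r)])
    (by
      intro ξ
      simp only [Matrix.of_apply, add_mul, Finset.sum_add_distrib, hdiag]
      have := (abs_le.1 (hlip x y hx hy ξ)).1
      rw [← ht] at this
      linarith)
    (fun r s => - pd r (pd s v) y) _ T4
  simp only [Matrix.of_apply, if_true] at P1 P3 P4
  -- traces
  have tr1 : ∑ r, (a x r r - K * t - lam / 2 * (e r * e r)) ≤
      Θ - lam / 2 := by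
    have h1 := htr x hx
    simp only [Finset.sum_sub_distrib, ← Finset.mul_sum, ← sq, hee]
    have : 0 ≤ K * ∑ r : Fin n, t := mul_nonneg hK (Finset.sum_nonneg fun _ _ => ht0)
    linarith
  have tr3 : ∑ r : Fin n, K * t = n * (K * t) := by simp
  have tr4 : ∑ r : Fin n, (a y r r - a x r r + K * t) ≤ 2 * n * (K * t) := by
    have : ∀ r : Fin n, (a y r r - a x r r + K * t) ≤ 2 * (K * t) := by
      intro r
      have h := (abs_le.1 (hlip x y hx hy (Pi.single r 1))).2
      rw [← ht] at h
      simp [Pi.single_apply] at h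
      linarith
    refine (Finset.sum_le_sum fun r _ => this r).trans ?_
    simp; linarith
  have fx := (abs_le.1 (hvF x hx)).1
  have fy := (abs_le.1 (hvF y hy)).2
  have total : (∑ r, ∑ s, a x r s * pd r (pd s v) x) - ∑ r, ∑ s, a y r s * pd r (pd s v) y =
      (∑ r, ∑ s, (a x r s - (if r = s then K * t else 0) - lam / 2 * (e r * e s)) *
        (pd r (pd s v) x - pd r (pd s v) y)) +
      lam / 2 * (∑ r, ∑ s, e r * e s * (pd r (pd s v) x - pd r (pd s v) y)) +
      (∑ r, ∑ s, (if r = s then K * t else 0) * pd r (pd s v) x) +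
      ∑ r, ∑ s, (a y r s - a x r s + if r = s then K * t else 0) * (- pd r (pd s v) y) := by
    simp only [Finset.mul_sum, ← Finset.sum_add_distrib, ← Finset.sum_sub_distrib]
    refine Finset.sum_congr rfl fun r _ => Finset.sum_congr rfl fun s _ => ?_
    ring
  have hAB : 0 ≤ A / t + 2 * B := by positivity
  have Q1 := P1.trans (mul_le_mul_of_nonneg_left tr1 (by positivity : 0 ≤ 4 * B))
  have Q2 := mul_le_mul_of_nonneg_left T2 (by positivity : 0 ≤ lam / 2)
  rw [tr3] at P3
  have Q4 := P4.trans (mul_le_mul_of_nonneg_left tr4 hAB)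
  have hfin : -(2 * F) ≤ 4 * B * (Θ - lam / 2) + lam / 2 * (- A / δ + 4 * B) +
      (A / t + 2 * B) * (3 * n * (K * t)) := by
    have : (A / t + 2 * B) * (3 * n * (K * t)) = (A / t + 2 * B) * (n * (K * t)) +
      (A / t + 2 * B) * (2 * n * (K * t)) := by ring
    rw [this]
    linarith
  have e1 : (A / t + 2 * B) * (3 * n * (K * t)) = 3 * n * K * A + 6 * n * K * t * B := by
    field_simp; ring
  have e2 : 3 * n * K * A ≤ lam / (4 * δ) * A := by
    apply mul_le_mul_of_nonneg_right _ hA0.le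
    rw [le_div_iff₀ (by positivity)]
    linarith
  have e3 : 6 * n * K * t * B ≤ lam * B := by
    apply mul_le_mul_of_nonneg_right _ hB0
    have h0 : 0 ≤ 6 * (n:ℝ) * K := by positivity
    have := mul_le_mul_of_nonneg_left ht2 h0
    linarith
  have e4 : A * (lam / (4 * δ)) ≤ 2 * F + 5 * Θ * B := by
    have : lam / 2 * (- A / δ + 4 * B) = - 2 * (A * (lam / (4 * δ))) + 2 * lam * B := by
      field_simp; ring
    have h8 : lam * B ≤ Θ * B := mul_le_mul_of_nonneg_right hlT hB0
    have : lam / (4 * δ) * A = A * (lam / (4 * δ)) := by ring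
    linarith
  have e5 : A ≤ 4 * δ / lam * (2 * F + 5 * Θ * B) := by
    have := mul_le_mul_of_nonneg_left e4 (by positivity : 0 ≤ 4 * δ / lam)
    have h9 : 4 * δ / lam * (A * (lam / (4 * δ))) = A := by field_simp
    linarith
  linarith

theorem grad_est {n : ℕ} (a : Pt n → Matrix (Fin n) (Fin n) ℝ) (v : Pt n → ℝ) (hv : Sm v)
    (x0 : Pt n) (δ lam Θ K F M : ℝ) (hδ : 0 < δ) (hlam : 0 < lam) (hK : 0 ≤ K) (hF : 0 ≤ F)
    (hM : 0 ≤ M)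
    (hsym : ∀ x r s, a x r s = a x s r)
    (hell : ∀ x, en (x - x0) ≤ δ → ∀ ξ : Fin n → ℝ,
      lam * ∑ r, ξ r ^ 2 ≤ ∑ r, ∑ s, a x r s * ξ r * ξ s)
    (htr : ∀ x, en (x - x0) ≤ δ → ∑ r, a x r r ≤ Θ) (hlT : lam ≤ Θ)
    (hlip : ∀ x y, en (x - x0) ≤ δ → en (y - x0) ≤ δ → ∀ ξ : Fin n → ℝ,
      |∑ r, ∑ s, (a y r s - a x r s) * ξ r * ξ s| ≤ K * en (x - y) * ∑ r, ξ r ^ 2)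
    (hs1 : 4 * K * δ ≤ lam) (hs2 : 12 * n * K * δ ≤ lam)
    (hvM : ∀ x, en (x - x0) ≤ δ → |v x| ≤ M)
    (hvF : ∀ x, en (x - x0) ≤ δ → |∑ r, ∑ s, a x r s * pd r (pd s v) x| ≤ F) (i : Fin n) :
    |pd i v x0| ≤ 4 / lam * (2 * (δ * F) + 10 * Θ * (M / δ)) := by
  have hr : 4 / lam * (2 * (δ * F) + 10 * Θ * (M / δ)) =
      4 * δ / lam * (2 * F + 5 * Θ * (2 * M / δ ^ 2)) := by field_simp; ring
  rw [hr]
  refine le_of_forall_gt_imp_ge_of_dense fun A hA => ?_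
  have D := doubling a v hv x0 δ lam Θ K F M A hδ hlam hK hF hM hsym hell htr hlT hlip hs1 hs2
    hvM hvF hA
  have hΘ : 0 < Θ := hlam.trans_le hlT
  have hA0 : 0 < A := lt_of_le_of_lt (by positivity) hA
  set B := 2 * M / δ ^ 2 with hB
  have hB0 : 0 ≤ B := by positivity
  set ei : Pt n := Pi.single i 1
  have hei : en ei = 1 := by
    have : en ei ^ 2 = 1 := by rw [en_sq]; simp [ei, Pi.single_apply]
    nlinarith [en_nonneg ei]
  have hder : HasDerivAt (fun s : ℝ => v (x0 + s • ei)) (pd i v x0) 0 := by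
    have := hasDerivAt_line hv x0 ei 0
    simpa [ei, Pi.single_apply] using this
  have hbd : ∀ s : ℝ, 0 < s → s ≤ δ → |v (x0 + s • ei) - v x0| ≤ (A + B * s) * s := by
    intro s hs hsd
    have h1 : en (x0 + s • ei - x0) = s := by
      rw [add_sub_cancel_left, en_smul, hei, abs_of_pos hs, mul_one]
    have h2 : en (x0 - (x0 + s • ei)) = s := by rw [en_sub_comm, h1]
    have d1 := D (x0 + s • ei) x0 (by rw [h1]; exact hsd) (by rw [sub_self, en_zero]; exact hδ.le)
    have d2 := D x0 (x0 + s • ei) (by rw [sub_self, en_zero]; exact hδ.le) (by rw [h1]; exact hsd)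
    rw [h1, sub_self, en_zero] at d1
    rw [h2, h1, sub_self, en_zero] at d2
    have : 0 ≤ A * (s ^ 2 / (8 * δ)) := by positivity
    rw [abs_le]
    constructor <;> nlinarith
  have hsl := hder.hasDerivWithinAt (s := Set.Ioi 0)
  rw [hasDerivWithinAt_iff_tendsto_slope' (by simp)] at hsl
  have hlim : Tendsto (fun s : ℝ => A + B * s) (nhdsWithin 0 (Set.Ioi 0)) (nhds A) := by
    have : Continuous fun s : ℝ => A + B * s := by fun_prop
    have := (this.tendsto 0).mono_left (nhdsWithin_le_nhds (s := Set.Ioi 0))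
    simpa using this
  refine le_of_tendsto_of_tendsto hsl.abs hlim ?_
  have : ∀ᶠ s : ℝ in nhdsWithin 0 (Set.Ioi 0), s ≤ δ :=
    mem_nhdsWithin_of_mem_nhds (Iic_mem_nhds hδ)
  filter_upwards [this, self_mem_nhdsWithin] with s h1 h2
  have h2' : 0 < s := h2
  have h3 := hbd s h2' h1
  rw [slope_def_field, abs_div, sub_zero, abs_of_pos h2', div_le_iff₀ h2']
  simpa using h3


theorem pd_comm {n : ℕ} {f : Pt n → ℝ} (hf : Sm f) (i j : Fin n) :
    pd i (pd j f) = pd j (pd i f) := by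
  have key : ∀ (i j : Fin n) (x : Pt n), pd i (pd j f) x =
      fderiv ℝ (fderiv ℝ f) x (Pi.single i 1) (Pi.single j 1) := by
    intro i j x
    have hd : DifferentiableAt ℝ (fderiv ℝ f) x :=
      (hf.fderiv_right (m := (⊤ : ℕ∞)) (by simp)).differentiable (by simp) x
    have : pd j f = fun y => fderiv ℝ f y (Pi.single j 1) := rfl
    rw [this]
    unfold pd
    rw [fderiv_clm_apply hd (differentiableAt_const _)]
    simp
  funext x
  rw [key, key]
  have : IsSymmSndFDerivAt ℝ f x := by
    apply (hf.contDiffAt (x := x)).isSymmSndFDerivAt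
    simp
    exact WithTop.coe_le_coe.2 le_top
  exact this _ _

theorem pd_add {n : ℕ} {f h : Pt n → ℝ} (hf : Sm f) (hh : Sm h) (i : Fin n) :
    pd i (f + h) = pd i f + pd i h := by
  funext x; unfold pd
  rw [fderiv_add (hf.diff x) (hh.diff x)]; rfl

theorem pd_neg {n : ℕ} {f : Pt n → ℝ} (i : Fin n) :
    pd i (-f) = - pd i f := by
  funext x; unfold pd
  rw [fderiv_neg]; rfl

theorem pd_const {n : ℕ} (c : ℝ) (i : Fin n) :
    pd i (fun _ : Pt n => c) = fun _ => 0 := by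
  funext x; unfold pd; simp

theorem pd_mul {n : ℕ} {f h : Pt n → ℝ} (hf : Sm f) (hh : Sm h) (i : Fin n) :
    pd i (f * h) = pd i f * h + f * pd i h := by
  funext x; unfold pd
  rw [fderiv_mul (hf.diff x) (hh.diff x)]
  simp; ring

theorem pd_sum {n : ℕ} {ι : Type*} (s : Finset ι) {f : ι → Pt n → ℝ} (hf : ∀ A, Sm (f A)) (i : Fin n) :
    pd i (∑ A ∈ s, f A) = ∑ A ∈ s, pd i (f A) := by
  funext x; unfold pd
  rw [fderiv_sum (fun A _ => (hf A).diff x)]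
  simp

theorem Sm.add' {n : ℕ} {f h : Pt n → ℝ} (hf : Sm f) (hh : Sm h) : Sm (f + h) := ContDiff.add hf hh
theorem Sm.mul' {n : ℕ} {f h : Pt n → ℝ} (hf : Sm f) (hh : Sm h) : Sm (f * h) := ContDiff.mul hf hh
theorem Sm.neg' {n : ℕ} {f : Pt n → ℝ} (hf : Sm f) : Sm (-f) := ContDiff.neg hf
theorem Sm.const {n : ℕ} (c : ℝ) : Sm (fun _ : Pt n => c) := contDiff_const
theorem Sm.sum' {n : ℕ} {ι : Type*} (s : Finset ι) {f : ι → Pt n → ℝ} (hf : ∀ A, Sm (f A)) :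
    Sm (∑ A ∈ s, f A) := by
  classical
  induction s using Finset.induction_on with
  | empty => exact Sm.const (n := n) 0
  | insert a s ha ih => rw [Finset.sum_insert ha]; exact (hf a).add' ih

/-- iterated partial derivatives along a word -/
noncomputable def pdL {n : ℕ} : List (Fin n) → (Pt n → ℝ) → Pt n → ℝ
  | [], f => f
  | i :: J, f => pdL J (pd i f)

theorem Sm.pdL {n : ℕ} (J : List (Fin n)) {f : Pt n → ℝ} (hf : Sm f) : Sm (pdL J f) := by
  induction J generalizing f with
  | nil => exact hf
  | cons i J ih => exact ih (hf.pd i)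

theorem pd_pdL {n : ℕ} (J : List (Fin n)) {f : Pt n → ℝ} (hf : Sm f) (i : Fin n) :
    pd i (pdL J f) = pdL J (pd i f) := by
  induction J generalizing f with
  | nil => rfl
  | cons j J ih => simp only [pdL]; rw [ih (hf.pd j), pd_comm hf]

theorem pdL_add {n : ℕ} (J : List (Fin n)) {f h : Pt n → ℝ} (hf : Sm f) (hh : Sm h) :
    pdL J (f + h) = pdL J f + pdL J h := by
  induction J generalizing f h with
  | nil => rfl
  | cons j J ih => simp only [pdL]; rw [pd_add hf hh, ih (hf.pd j) (hh.pd j)]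

theorem pdL_const {n : ℕ} (c : ℝ) (J : List (Fin n)) (hJ : J ≠ []) :
    pdL J (fun _ : Pt n => c) = fun _ => 0 := by
  induction J generalizing c with
  | nil => exact absurd rfl hJ
  | cons j J ih =>
    simp only [pdL]; rw [pd_const]
    by_cases h : J = []
    · subst h; rfl
    · exact ih 0 h

theorem pdL_cmul {n : ℕ} (c : ℝ) (J : List (Fin n)) {f : Pt n → ℝ} (hf : Sm f) :
    pdL J ((fun _ : Pt n => c) * f) = (fun _ => c) * pdL J f := by
  induction J generalizing f with
  | nil => rfl
  | cons j J ih =>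
    simp only [pdL]; rw [pd_mul (Sm.const c) hf, pd_const]
    have : (fun _ : Pt n => (0:ℝ)) * f + (fun _ => c) * pd j f = (fun _ => c) * pd j f := by
      funext x; simp
    rw [this, ih (hf.pd j)]

theorem pdL_sum {n : ℕ} {ι : Type*} (J : List (Fin n)) (s : Finset ι) {f : ι → Pt n → ℝ}
    (hf : ∀ A, Sm (f A)) : pdL J (∑ A ∈ s, f A) = ∑ A ∈ s, pdL J (f A) := by
  induction J generalizing f with
  | nil => rfl
  | cons j J ih => simp only [pdL]; rw [pd_sum s hf, ih (fun A => (hf A).pd j)]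

/-- Leibniz bound -/
theorem pdL_mul_le {n : ℕ} (J : List (Fin n)) {f h : Pt n → ℝ} (hf : Sm f) (hh : Sm h)
    (α β : ℕ → ℝ) (x : Pt n)
    (hα : ∀ J' : List (Fin n), J'.length ≤ J.length → |pdL J' f x| ≤ α J'.length)
    (hβ : ∀ J' : List (Fin n), J'.length ≤ J.length → |pdL J' h x| ≤ β J'.length) :
    |pdL J (f * h) x| ≤ ∑ p ∈ Finset.HasAntidiagonal.antidiagonal J.length,
      (J.length.choose p.1 : ℝ) * (α p.1 * β p.2) := by
  induction J generalizing f h α β with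
  | nil =>
    have h1 := hα [] le_rfl
    have h2 := hβ [] le_rfl
    simp only [pdL, List.length_nil] at h1 h2 ⊢
    simp [abs_mul]
    exact mul_le_mul h1 h2 (abs_nonneg _) ((abs_nonneg _).trans h1)
  | cons i J ih =>
    simp only [pdL, List.length_cons]
    rw [pd_mul hf hh, pdL_add J ((hf.pd i).mul' hh) (hf.mul' (hh.pd i))]
    have h1 := ih (hf.pd i) hh (fun m => α (m+1)) β
      (fun J' hJ' => by simpa [pdL] using hα (i :: J') (by simpa using hJ'))
      (fun J' hJ' => hβ J' (by simp; omega))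
    have h2 := ih hf (hh.pd i) α (fun m => β (m+1))
      (fun J' hJ' => hα J' (by simp; omega))
      (fun J' hJ' => by simpa [pdL] using hβ (i :: J') (by simpa using hJ'))
    rw [Finset.sum_antidiagonal_choose_succ_mul (fun a b => α a * β b)]
    have h3 : ∑ p ∈ Finset.HasAntidiagonal.antidiagonal J.length, (J.length.choose p.2 : ℝ) * (α (p.1+1) * β p.2) =
        ∑ p ∈ Finset.HasAntidiagonal.antidiagonal J.length, (J.length.choose p.1 : ℝ) * (α (p.1+1) * β p.2) := by
      refine Finset.sum_congr rfl fun p hp => ?_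
      rw [Nat.choose_symm_of_eq_add (Finset.HasAntidiagonal.mem_antidiagonal.1 hp).symm]
    rw [h3]
    refine (abs_add_le _ _).trans ?_
    linarith

/-- weights -/
noncomputable def cc (j : ℕ) : ℝ := (j.factorial : ℝ) / ((j : ℝ) + 1) ^ 2

theorem cc_pos (j : ℕ) : 0 < cc j := by unfold cc; positivity

theorem sum_inv_sq (k : ℕ) :
    ∑ i ∈ Finset.range (k + 1), 1 / ((i : ℝ) + 1) ^ 2 ≤ 2 - 1 / ((k : ℝ) + 1) := by
  induction k with
  | zero => norm_num
  | succ k ih =>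
    rw [Finset.sum_range_succ]
    push_cast
    have : 1 / ((k : ℝ) + 1 + 1) ^ 2 ≤ 1 / ((k:ℝ) + 1) - 1 / ((k : ℝ) + 1 + 1) := by
      rw [div_sub_div _ _ (by positivity) (by positivity), div_le_div_iff₀ (by positivity) (by positivity)]
      nlinarith [(Nat.cast_nonneg k : (0:ℝ) ≤ k)]
    linarith

theorem cc_conv (k : ℕ) : ∑ p ∈ Finset.HasAntidiagonal.antidiagonal k, (k.choose p.1 : ℝ) * (cc p.1 * cc p.2)
    ≤ 8 * cc k := by
  have h1 : ∀ p ∈ Finset.HasAntidiagonal.antidiagonal k, (k.choose p.1 : ℝ) * (cc p.1 * cc p.2) ≤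
      2 * cc k * (1 / ((p.1 : ℝ) + 1) ^ 2 + 1 / ((p.2 : ℝ) + 1) ^ 2) := by
    intro p hp
    have hp := Finset.HasAntidiagonal.mem_antidiagonal.1 hp
    have hc : (k.choose p.1 : ℝ) * (p.1.factorial * p.2.factorial) = k.factorial := by
      rw [← hp]; exact_mod_cast by
        have := Nat.choose_mul_factorial_mul_factorial (Nat.le_add_right p.1 p.2)
        rw [Nat.add_sub_cancel_left] at this
        rw [← mul_assoc]; exact this
    have : (k.choose p.1 : ℝ) * (cc p.1 * cc p.2) =
        k.factorial * (1 / (((p.1 : ℝ) + 1) ^ 2 * ((p.2 : ℝ) + 1) ^ 2)) := by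
      rw [← hc]; unfold cc; field_simp
    rw [this]
    have hk : (k : ℝ) = p.1 + p.2 := by rw [← hp]; push_cast; rfl
    unfold cc
    rw [hk]
    have ha : (0:ℝ) ≤ (p.1 : ℝ) := Nat.cast_nonneg _
    have hb : (0:ℝ) ≤ (p.2 : ℝ) := Nat.cast_nonneg _
    generalize (p.1 : ℝ) = a at *
    generalize (p.2 : ℝ) = b at *
    have e : 2 * ((k.factorial : ℝ) / (a + b + 1) ^ 2) * (1 / (a + 1) ^ 2 + 1 / (b + 1) ^ 2) =
        (k.factorial : ℝ) * ((2 * ((b+1)^2 + (a+1)^2) / (a + b + 1) ^ 2) / ((a + 1) ^ 2 * (b + 1) ^ 2)) := by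
      field_simp
    rw [e]
    gcongr
    rw [le_div_iff₀ (by positivity)]
    nlinarith [sq_nonneg (a - b)]
  refine (Finset.sum_le_sum h1).trans ?_
  rw [← Finset.mul_sum, Finset.sum_add_distrib]
  have s1 : ∑ p ∈ Finset.HasAntidiagonal.antidiagonal k, 1 / ((p.1 : ℝ) + 1) ^ 2 =
      ∑ i ∈ Finset.range (k+1), 1 / ((i : ℝ) + 1) ^ 2 :=
    Finset.Nat.sum_antidiagonal_eq_sum_range_succ (fun i _ => 1 / ((i : ℝ) + 1) ^ 2) k
  have s2 : ∑ p ∈ Finset.HasAntidiagonal.antidiagonal k, 1 / ((p.2 : ℝ) + 1) ^ 2 =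
      ∑ p ∈ Finset.HasAntidiagonal.antidiagonal k, 1 / ((p.1 : ℝ) + 1) ^ 2 := by
    rw [← Finset.Nat.sum_antidiagonal_swap]; rfl
  rw [s2, s1]
  have := sum_inv_sq k
  have h3 : (0:ℝ) ≤ 1 / ((k : ℝ) + 1) := by positivity
  have := cc_pos k
  nlinarith

/-- Derivative bounds up to order `k` with special treatment of the top order. -/
def Bd {n : ℕ} (k : ℕ) (τ ρ P : ℝ) (x : Pt n) (f : Pt n → ℝ) : Prop :=
  ∀ J : List (Fin n), J.length ≤ k →
    |pdL J f x| ≤ (if J.length = k then τ else 1) * (P * ρ ^ J.length * cc J.length)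

theorem Bd.mul {n : ℕ} {k : ℕ} {τ ρ P P' : ℝ} {x : Pt n} {f h : Pt n → ℝ} (hk : 1 ≤ k) (hτ : 1 ≤ τ)
    (hρ : 0 ≤ ρ) (hP : 0 ≤ P) (hP' : 0 ≤ P') (hf : Sm f) (hh : Sm h)
    (h1 : Bd k τ ρ P x f) (h2 : Bd k τ ρ P' x h) : Bd k τ ρ (8 * P * P') x (f * h) := by
  intro J hJ
  refine (pdL_mul_le J hf hh (fun m => (if m = k then τ else 1) * (P * ρ ^ m * cc m))
    (fun m => (if m = k then τ else 1) * (P' * ρ ^ m * cc m)) x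
    (fun J' hJ' => h1 J' (hJ'.trans hJ)) (fun J' hJ' => h2 J' (hJ'.trans hJ))).trans ?_
  have h3 : ∀ p ∈ Finset.HasAntidiagonal.antidiagonal J.length,
      (J.length.choose p.1 : ℝ) * (((if p.1 = k then τ else 1) * (P * ρ ^ p.1 * cc p.1)) *
        ((if p.2 = k then τ else 1) * (P' * ρ ^ p.2 * cc p.2))) ≤
      ((if J.length = k then τ else 1) * (P * P' * ρ ^ J.length)) *
        ((J.length.choose p.1 : ℝ) * (cc p.1 * cc p.2)) := by
    intro p hp
    have hp := Finset.HasAntidiagonal.mem_antidiagonal.1 hp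
    have hcp : 0 ≤ (J.length.choose p.1 : ℝ) * (cc p.1 * cc p.2) :=
      mul_nonneg (Nat.cast_nonneg _) (mul_nonneg (cc_pos _).le (cc_pos _).le)
    have hσ : (if p.1 = k then τ else 1) * (if p.2 = k then τ else 1) ≤
        (if J.length = k then τ else 1) := by
      split_ifs <;> first | omega | nlinarith
    calc _ = ((if p.1 = k then τ else 1) * (if p.2 = k then τ else 1) * (P * P' * ρ ^ J.length)) *
        ((J.length.choose p.1 : ℝ) * (cc p.1 * cc p.2)) := by
          rw [← hp, pow_add]; ring
      _ ≤ _ := by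
          refine mul_le_mul_of_nonneg_right (mul_le_mul_of_nonneg_right hσ (by positivity)) hcp
  refine (Finset.sum_le_sum h3).trans ?_
  rw [← Finset.mul_sum]
  have hpos : 0 ≤ (if J.length = k then τ else 1) * (P * P' * ρ ^ J.length) := by
    refine mul_nonneg ?_ (by positivity)
    split_ifs <;> linarith
  refine (mul_le_mul_of_nonneg_left (cc_conv _) hpos).trans (le_of_eq (by ring))

theorem Bd.add {n : ℕ} {k : ℕ} {τ ρ P P' : ℝ} {x : Pt n} {f h : Pt n → ℝ} (hf : Sm f) (hh : Sm h)
    (h1 : Bd k τ ρ P x f) (h2 : Bd k τ ρ P' x h) : Bd k τ ρ (P + P') x (f + h) := by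
  intro J hJ
  rw [pdL_add J hf hh]
  refine (abs_add_le _ _).trans ((add_le_add (h1 J hJ) (h2 J hJ)).trans (le_of_eq (by ring)))

theorem Bd.const {n : ℕ} {k : ℕ} {τ ρ : ℝ} {x : Pt n} (hk : 1 ≤ k) (hτ : 1 ≤ τ) (hρ : 0 ≤ ρ)
    (c : ℝ) : Bd k τ ρ |c| x (fun _ => c) := by
  intro J hJ
  by_cases h : J = []
  · subst h
    have : ¬ (0 = k) := by omega
    simp [pdL, cc, this]
  · rw [pdL_const c J h]
    have : 0 ≤ (if J.length = k then τ else 1) := by split_ifs <;> linarith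
    have h2 := (cc_pos J.length).le
    simp only [abs_zero]
    positivity

/-- bounds for elements of a generated algebra -/
theorem Bd.adjoin {n : ℕ} {S : Set (Pt n → ℝ)} (hS : ∀ f ∈ S, Sm f) {f : Pt n → ℝ}
    (hf : f ∈ Algebra.adjoin ℝ S) (M : ℝ) (hM : 0 ≤ M) :
    Sm f ∧ ∃ P : ℝ, 0 ≤ P ∧ ∀ (k : ℕ) (τ ρ : ℝ) (x : Pt n), 1 ≤ k → 1 ≤ τ → 0 ≤ ρ →
      (∀ s ∈ S, Bd k τ ρ M x s) → Bd k τ ρ P x f := by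
  induction hf using Algebra.adjoin_induction with
  | mem s hs => exact ⟨hS s hs, M, hM, fun k τ ρ x _ _ _ h => h s hs⟩
  | algebraMap c =>
    exact ⟨Sm.const c, |c|, abs_nonneg _, fun k τ ρ x hk hτ hρ _ => Bd.const hk hτ hρ c⟩
  | add f h _ _ ihf ihh =>
    obtain ⟨sf, P, hP, h1⟩ := ihf
    obtain ⟨sh, P', hP', h2⟩ := ihh
    exact ⟨sf.add' sh, P + P', by positivity, fun k τ ρ x hk hτ hρ h =>
      Bd.add sf sh (h1 k τ ρ x hk hτ hρ h) (h2 k τ ρ x hk hτ hρ h)⟩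
  | mul f h _ _ ihf ihh =>
    obtain ⟨sf, P, hP, h1⟩ := ihf
    obtain ⟨sh, P', hP', h2⟩ := ihh
    exact ⟨sf.mul' sh, 8 * P * P', by positivity, fun k τ ρ x hk hτ hρ h =>
      Bd.mul hk hτ hρ hP hP' sf sh (h1 k τ ρ x hk hτ hρ h) (h2 k τ ρ x hk hτ hρ h)⟩


theorem pd_congr {n : ℕ} {f h : Pt n → ℝ} {x : Pt n} (e : f =ᶠ[nhds x] h) (i : Fin n) :
    pd i f =ᶠ[nhds x] pd i h := by
  filter_upwards [e.fderiv (𝕜 := ℝ)] with y hy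
  unfold pd; rw [hy]

theorem pdL_congr {n : ℕ} {f h : Pt n → ℝ} {x : Pt n} (e : f =ᶠ[nhds x] h) (J : List (Fin n)) :
    pdL J f x = pdL J h x := by
  induction J generalizing f h with
  | nil => exact e.self_of_nhds
  | cons i J ih => exact ih (pd_congr e i)

theorem exists_bd {n : ℕ} {ι : Type*} [Finite ι] (w : ι → Pt n → ℝ) (hw : ∀ A, Sm (w A))
    (K : Set (Pt n)) (hK : IsCompact K) (k : ℕ) :
    ∃ B : ℝ, 0 ≤ B ∧ ∀ x ∈ K, ∀ A, ∀ J : List (Fin n), J.length = k → |pdL J (w A) x| ≤ B := by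
  have hfin : ({J : List (Fin n) | J.length = k}).Finite := List.finite_length_eq (Fin n) k
  have h1 : ∀ p : ι × List (Fin n), ∃ B : ℝ, ∀ x ∈ K, |pdL p.2 (w p.1) x| ≤ B := by
    intro p
    obtain ⟨B, hB⟩ := hK.exists_bound_of_continuousOn ((hw p.1).pdL p.2).continuous.continuousOn
    exact ⟨B, fun x hx => hB x hx⟩
  choose B hB using h1
  have hfin2 : ((Set.univ : Set ι) ×ˢ {J : List (Fin n) | J.length = k}).Finite :=
    Set.finite_univ.prod hfin
  obtain ⟨C, hC⟩ := (hfin2.image B).bddAbove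
  refine ⟨max C 0, le_max_right _ _, fun x hx A J hJ => ?_⟩
  exact (hB (A, J) x hx).trans ((hC ⟨(A, J), ⟨Set.mem_univ _, hJ⟩, rfl⟩).trans (le_max_left _ _))

theorem cc_pred (j : ℕ) : (j + 2 : ℝ) * cc j ≤ 8 * cc (j + 1) := by
  unfold cc
  rw [Nat.factorial_succ, mul_div_assoc', mul_div_assoc', div_le_div_iff₀ (by positivity) (by positivity)]
  push_cast
  have hf : (0:ℝ) < j.factorial := by positivity
  have hj : (0:ℝ) ≤ j := Nat.cast_nonneg _
  have : ((j:ℝ) + 2) * ((j:ℝ) + 1 + 1) ^ 2 ≤ 8 * (((j:ℝ) + 1)) * ((j:ℝ) + 1) ^ 2 := by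
    nlinarith [mul_nonneg hj hj, mul_nonneg (mul_nonneg hj hj) hj]
  calc _ = j.factorial * (((j:ℝ) + 2) * ((j:ℝ) + 1 + 1) ^ 2) := by ring
    _ ≤ j.factorial * (8 * (((j:ℝ) + 1)) * ((j:ℝ) + 1) ^ 2) := mul_le_mul_of_nonneg_left this hf.le
    _ = _ := by ring

/-- pointwise induction hypothesis -/
def Hy {n : ℕ} {ι : Type*} (w : ι → Pt n → ℝ) (k : ℕ) (τ ρ M : ℝ) (y : Pt n) : Prop :=
  (∀ A, |w A y| ≤ M) ∧ ∀ A, ∀ (J : List (Fin n)) (i : Fin n), J.length ≤ k →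
    |pdL (i :: J) (w A) y| ≤ (if J.length = k then τ else 1) * (M * ρ ^ J.length * cc J.length)

/-- the generators: unknowns and their first derivatives -/
def Gen {n : ℕ} {ι : Type*} (w : ι → Pt n → ℝ) : Set (Pt n → ℝ) :=
  {f | (∃ A, f = w A) ∨ ∃ A i, f = pd i (w A)}

theorem gen_sm {n : ℕ} {ι : Type*} {w : ι → Pt n → ℝ} (hw : ∀ A, Sm (w A)) :
    ∀ f ∈ Gen w, Sm f := by
  rintro f (⟨A, rfl⟩ | ⟨A, i, rfl⟩)
  · exact hw A
  · exact (hw A).pd i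

theorem gen_bd {n : ℕ} {ι : Type*} {w : ι → Pt n → ℝ} {k : ℕ} {τ ρ M : ℝ} {y : Pt n}
    (hτ : 1 ≤ τ) (hρ : 1 ≤ ρ) (hM : 0 ≤ M) (h : Hy w k τ ρ M y) :
    ∀ s ∈ Gen w, Bd k τ ρ (4 * M) y s := by
  have hσ : ∀ m, 1 ≤ (if m = k then τ else 1) := by intro m; split_ifs <;> linarith
  rintro f (⟨A, rfl⟩ | ⟨A, i, rfl⟩) J hJ
  · cases J with
    | nil =>
      have h1 := h.1 A
      have h2 := hσ 0
      simp only [pdL, List.length_nil, pow_zero, cc]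
      simp only [Nat.factorial_zero]
      norm_num
      split_ifs <;> nlinarith [abs_nonneg (w A y)]
    | cons i J =>
      simp only [List.length_cons] at hJ ⊢
      have h1 := h.2 A J i (by omega)
      rw [if_neg (by omega)] at h1
      have h2 := cc_pred J.length
      have h3 := cc_pos J.length
      have h4 : 0 < ρ ^ J.length := by positivity
      have h5 : cc J.length ≤ 4 * cc (J.length + 1) := by
        have : 0 ≤ (J.length : ℝ) * cc J.length := by positivity
        linarith
      have h6 : ρ ^ J.length ≤ ρ ^ (J.length + 1) := pow_le_pow_right₀ hρ (by omega)
      calc _ ≤ 1 * (M * ρ ^ J.length * cc J.length) := h1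
        _ ≤ 1 * (M * ρ ^ (J.length + 1) * (4 * cc (J.length + 1))) := by gcongr
        _ ≤ (if J.length + 1 = k then τ else 1) * (M * ρ ^ (J.length + 1) * (4 * cc (J.length + 1))) := by
            refine mul_le_mul_of_nonneg_right (hσ _) ?_
            have := cc_pos (J.length + 1)
            positivity
        _ = _ := by ring
  · have h1 := h.2 A J i hJ
    refine h1.trans ?_
    have h2 := hσ J.length
    have h3 := cc_pos J.length
    gcongr
    linarith

theorem comm_conv (k : ℕ) (α β : ℕ → ℝ) (D τ ρ M : ℝ) (hτ : 0 ≤ τ) (hρ : 0 ≤ ρ) (hM : 0 ≤ M)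
    (h0 : α 0 = 0) (hα : ∀ i, i < k → α (i + 1) = M * ρ ^ i * cc i)
    (hβ : ∀ j, j < k → 0 ≤ β j ∧ β j ≤ τ * (M * ρ ^ (j + 1) * cc (j + 1))) :
    ∑ p ∈ Finset.HasAntidiagonal.antidiagonal k, (k.choose p.1 : ℝ) * (α p.1 * β p.2) ≤
      8 * k * (τ * (M * M * ρ ^ k * cc k)) := by
  rw [Finset.Nat.sum_antidiagonal_eq_sum_range_succ_mk, Finset.sum_range_succ']
  simp only [h0, zero_mul, mul_zero, add_zero]
  have hc := cc_conv k
  rw [Finset.Nat.sum_antidiagonal_eq_sum_range_succ_mk, Finset.sum_range_succ] at hc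
  have h1 : ∀ i ∈ Finset.range k, (k.choose (i + 1) : ℝ) * (α (i + 1) * β (k - (i + 1))) ≤
      k * (τ * (M * M * ρ ^ k)) * ((k.choose i : ℝ) * (cc i * cc (k - i))) := by
    intro i hi
    have hi := Finset.mem_range.1 hi
    rw [hα i hi]
    obtain ⟨hb0, hb⟩ := hβ (k - (i + 1)) (by omega)
    have e1 : k - (i + 1) + 1 = k - i := by omega
    rw [e1] at hb
    have hch : (k.choose (i + 1) : ℝ) ≤ k * (k.choose i : ℝ) := by
      have h2 := Nat.choose_succ_right_eq k i
      have h3 : k.choose (i+1) ≤ k * k.choose i := by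
        calc k.choose (i+1) ≤ k.choose (i+1) * (i+1) := Nat.le_mul_of_pos_right _ (by omega)
          _ = k.choose i * (k - i) := h2
          _ ≤ k.choose i * k := Nat.mul_le_mul_left _ (by omega)
          _ = _ := by ring
      exact_mod_cast h3
    have hci := (cc_pos i).le
    have hci2 := (cc_pos (k - i)).le
    calc (k.choose (i + 1) : ℝ) * (M * ρ ^ i * cc i * β (k - (i + 1)))
        ≤ (k * (k.choose i : ℝ)) * (M * ρ ^ i * cc i * (τ * (M * ρ ^ (k - i) * cc (k - i)))) := by
          gcongr
      _ = (k * (τ * (M * M * (ρ ^ i * ρ ^ (k - i))))) * ((k.choose i : ℝ) * (cc i * cc (k - i))) := by ring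
      _ = _ := by rw [← pow_add, show i + (k - i) = k by omega]
  refine (Finset.sum_le_sum h1).trans ?_
  rw [← Finset.mul_sum]
  have hlast : 0 ≤ (k.choose k : ℝ) * (cc k * cc (k - k)) :=
    mul_nonneg (Nat.cast_nonneg _) (mul_nonneg (cc_pos _).le (cc_pos _).le)
  have h5 : ∑ i ∈ Finset.range k, (k.choose i : ℝ) * (cc i * cc (k - i)) ≤ 8 * cc k := by
    simp only at hc
    linarith
  refine (mul_le_mul_of_nonneg_left h5 (by positivity)).trans (le_of_eq (by ring))

theorem Lv_bd {n : ℕ} {ι : Type*} [Finite ι] {w : ι → Pt n → ℝ} (hw : ∀ A, Sm (w A))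
    {U : Set (Pt n)} (hU : IsOpen U) (idx : Fin n → Fin n → ι) (A : ι) {f : Pt n → ℝ} 
    (heq : ∀ x ∈ U, ∑ r, ∑ s, w (idx r s) x * pd r (pd s (w A)) x = f x)
    {k : ℕ} {τ ρ M P : ℝ} {y : Pt n} (hy : y ∈ U)
    (hτ : 1 ≤ τ) (hρ : 1 ≤ ρ) (hM : 0 ≤ M) (h : Hy w k τ ρ M y) (hf : Bd k τ ρ P y f)
    (J : List (Fin n)) (hJ : J.length = k) :
    |∑ r, ∑ s, w (idx r s) y * pd r (pd s (pdL J (w A))) y| ≤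
      τ * ((P + 8 * n ^ 2 * M ^ 2 * k) * (ρ ^ k * cc k)) := by
  have hswap : ∀ r s, pd r (pd s (pdL J (w A))) = pdL J (pd r (pd s (w A))) := by
    intro r s
    rw [pd_pdL J (hw A), pd_pdL J ((hw A).pd s)]
  have h1 : pdL J f y = ∑ r, ∑ s, pdL J (w (idx r s) * pd r (pd s (w A))) y := by
    have : f =ᶠ[nhds y] ∑ r, ∑ s, w (idx r s) * pd r (pd s (w A)) := by
      filter_upwards [hU.mem_nhds hy] with x hx
      rw [← heq x hx]; simp
    have hs : ∀ r s, Sm (w (idx r s) * pd r (pd s (w A))) :=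
      fun r s => (hw _).mul' (((hw A).pd s).pd r)
    rw [pdL_congr this J, pdL_sum J _ (fun r => Sm.sum' _ (hs r))]
    simp only [Finset.sum_apply]
    refine Finset.sum_congr rfl fun r _ => ?_
    rw [pdL_sum J _ (hs r)]; simp
  have h2 : ∀ r s, |pdL J (w (idx r s) * pd r (pd s (w A))) y -
      w (idx r s) y * pdL J (pd r (pd s (w A))) y| ≤ 8 * k * (τ * (M * M * ρ ^ k * cc k)) := by
    intro r s
    set a := w (idx r s)
    have ha : Sm a := hw _
    set hh := pd r (pd s (w A)) with hhh
    have shh : Sm hh := ((hw A).pd s).pd r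
    have e1 : pdL J (a * hh) y - a y * pdL J hh y = pdL J ((a + fun _ => - a y) * hh) y := by
      rw [add_mul, pdL_add J (ha.mul' shh) ((Sm.const _).mul' shh), pdL_cmul _ J shh]
      simp; ring
    rw [e1]
    obtain ⟨B, hB0, hB⟩ := exists_bd (fun _ : Unit => hh) (fun _ => shh) {y} isCompact_singleton k
    have hL := pdL_mul_le J (ha.add' (Sm.const (- a y))) shh
      (fun i => if i = 0 then 0 else M * ρ ^ (i - 1) * cc (i - 1))
      (fun j => if j = k then B else (if j + 1 = k then τ else 1) * (M * ρ ^ (j + 1) * cc (j + 1))) y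
      (by
        intro J' hJ'
        cases J' with
        | nil => simp [pdL]
        | cons i J' =>
          rw [pdL_add _ ha (Sm.const _), pdL_const _ _ (by simp)]
          have := h.2 (idx r s) J' i (by simp at hJ'; omega)
          rw [if_neg (by simp at hJ'; omega)] at this
          simpa using this)
      (by
        intro J' hJ'
        by_cases hk : J'.length = k
        · simp only [hk, if_true]; exact hB y rfl () J' hk
        · simp only [hk, if_false]
          have := h.2 A (r :: J') s (by simp; omega)
          have e : pdL (s :: r :: J') (w A) = pdL J' hh := rfl
          rw [e] at this
          simpa using this)
    rw [hJ] at hL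
    refine hL.trans (comm_conv k (fun i => if i = 0 then 0 else M * ρ ^ (i - 1) * cc (i - 1))
      (fun j => if j = k then B else (if j + 1 = k then τ else 1) * (M * ρ ^ (j + 1) * cc (j + 1)))
      0 τ ρ M (by linarith) (by linarith) hM (if_pos rfl) ?_ ?_)
    · intro i hi
      exact if_neg (Nat.succ_ne_zero i)
    · intro j hj
      have h3 := (cc_pos (j+1)).le
      simp only [show ¬ (j = k) by omega, if_false]
      have h4 : 0 ≤ M * ρ ^ (j + 1) * cc (j + 1) := by positivity
      constructor
      · split_ifs <;> positivity
      · refine mul_le_mul_of_nonneg_right ?_ h4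
        split_ifs <;> linarith
  have h3 : ∑ r, ∑ s, w (idx r s) y * pd r (pd s (pdL J (w A))) y =
      pdL J f y - ∑ r, ∑ s, (pdL J (w (idx r s) * pd r (pd s (w A))) y -
      w (idx r s) y * pdL J (pd r (pd s (w A))) y) := by
    rw [h1]
    simp only [hswap, Finset.sum_sub_distrib]
    ring
  rw [h3]
  have h4 : |∑ r, ∑ s, (pdL J (w (idx r s) * pd r (pd s (w A))) y -
      w (idx r s) y * pdL J (pd r (pd s (w A))) y)| ≤
      n * (n * (8 * k * (τ * (M * M * ρ ^ k * cc k)))) := by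
    refine (Finset.abs_sum_le_sum_abs _ _).trans ?_
    have : ∀ r ∈ (Finset.univ : Finset (Fin n)), |∑ s, (pdL J (w (idx r s) * pd r (pd s (w A))) y -
      w (idx r s) y * pdL J (pd r (pd s (w A))) y)| ≤ n * (8 * k * (τ * (M * M * ρ ^ k * cc k))) := by
      intro r _
      refine (Finset.abs_sum_le_sum_abs _ _).trans ((Finset.sum_le_sum fun s _ => h2 r s).trans ?_)
      simp
    refine (Finset.sum_le_sum this).trans ?_
    simp
  have h5 := hf J hJ.le
  rw [hJ, if_pos rfl] at h5
  refine (abs_sub _ _).trans ((add_le_add h5 h4).trans (le_of_eq (by ring)))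


theorem pow_ratio {m k : ℕ} (hm : m ≤ k) {θ d d' Ac : ℝ} (hθ : 0 < θ) (hθ2 : θ ≤ 1 / 2) (hd : 0 < d)
    (hA : 0 < Ac) (hd' : d * (1 - θ / (k + 1)) ≤ d') : (Ac / d') ^ m ≤ 2 * (Ac / d) ^ m := by
  have hk : (0:ℝ) < k + 1 := by positivity
  have ht : θ / (k + 1) ≤ 1 / 2 := by
    rw [div_le_iff₀ hk]
    nlinarith [(Nat.cast_nonneg k : (0:ℝ) ≤ k)]
  have ht0 : 0 < θ / (k + 1) := by positivity
  set t := θ / (k + 1) with htdef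
  have hkt : m * t ≤ 1 / 2 := by
    have h1 : (m : ℝ) ≤ k + 1 := by
      have : (m : ℝ) ≤ k := by exact_mod_cast hm
      linarith
    calc m * t ≤ (k + 1) * t := by gcongr
      _ = θ := by rw [htdef]; field_simp
      _ ≤ _ := hθ2
  have hb : 1 / 2 ≤ (1 - t) ^ m := by
    have := one_add_mul_le_pow (a := -t) (by linarith) m
    have e : (1 + -t) = 1 - t := by ring
    rw [e] at this
    linarith
  have hd1 : 0 < d * (1 - t) := mul_pos hd (by linarith)
  have hd'0 : 0 < d' := lt_of_lt_of_le hd1 hd'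
  rw [div_pow, div_pow, ← mul_div_assoc, div_le_div_iff₀ (by positivity) (by positivity)]
  have h2 : (d * (1 - t)) ^ m ≤ d' ^ m := pow_le_pow_left₀ hd1.le hd' m
  rw [mul_pow] at h2
  have hdm : 0 < d ^ m := by positivity
  have h3 : d ^ m ≤ 2 * d' ^ m := by nlinarith
  have : 0 < Ac ^ m := by positivity
  nlinarith

theorem step_arith {m : ℕ} {τ Q M θ d Θ lam Ac δ ρ c1 c0 : ℝ} (hτ : 1 ≤ τ) (hQ0 : 0 ≤ Q) (hM : 1 ≤ M)
    (hθ : 0 < θ) (hd0 : 0 < d) (hd1 : d ≤ 1) (hΘ : 0 < Θ) (hlam : 0 < lam) (hA : 0 < Ac)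
    (hδ : δ = θ * d / (m + 1 + 1)) (hρ : ρ = Ac / d) (hc1 : 0 < c1) (hc0 : 0 < c0)
    (h1 : (m + 2) * c0 ≤ 8 * c1) (hρ1 : 1 ≤ ρ)
    (hθ5 : 4 / lam * (4 * θ * Q) ≤ 1 / 2) (hA2 : 4 / lam * (160 * Θ) ≤ 1 / 2 * (θ * Ac)) :
    4 / lam * (2 * (δ * (2 * τ * (Q * (m + 2)) * (ρ ^ (m + 1) * c1))) +
      10 * Θ * (2 * (M * ρ ^ m * c0) / δ)) ≤ (τ + 1) / 2 * (M * ρ ^ (m + 1) * c1) := by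
  have hm : (0:ℝ) < m + 1 + 1 := by positivity
  have hm2 : (m + 1 + 1 : ℝ) = m + 2 := by ring
  rw [hm2] at hδ hm
  have hX : 0 < ρ ^ (m + 1) * c1 := by positivity
  set X := ρ ^ (m + 1) * c1 with hXd
  have t1 : 2 * (δ * (2 * τ * (Q * (m + 2)) * X)) ≤ τ * (4 * θ * Q) * X := by
    have h2 : δ * (m + 2) = θ * d := by rw [hδ]; field_simp
    have : 2 * (δ * (2 * τ * (Q * (m + 2)) * X)) = d * (τ * (4 * θ * Q) * X) := by
      calc _ = (δ * (m + 2)) * (4 * τ * Q * X) := by ring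
        _ = _ := by rw [h2]; ring
    rw [this]
    have h3 : 0 ≤ τ * (4 * θ * Q) * X := by positivity
    exact mul_le_of_le_one_left h3 hd1
  have t2 : 10 * Θ * (2 * (M * ρ ^ m * c0) / δ) ≤ 160 * Θ / (θ * Ac) * (M * X) := by
    have e : 10 * Θ * (2 * (M * ρ ^ m * c0) / δ) = 20 * Θ * M * ρ ^ m / (θ * d) * ((m + 2) * c0) := by
      rw [hδ]; generalize ρ ^ m = q; field_simp; ring
    have e2 : 160 * Θ / (θ * Ac) * (M * X) = 20 * Θ * M * ρ ^ m / (θ * d) * (8 * c1) := by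
      rw [hXd, pow_succ]
      generalize ρ ^ m = q
      rw [hρ]; field_simp; ring
    rw [e, e2]
    gcongr
  have hC : 0 < 4 / lam := by positivity
  have t3 : 4 / lam * (160 * Θ / (θ * Ac)) ≤ 1 / 2 := by
    rw [← mul_div_assoc, div_le_iff₀ (by positivity)]; exact hA2
  have hMX : X ≤ M * X := le_mul_of_one_le_left hX.le hM
  calc 4 / lam * (2 * (δ * (2 * τ * (Q * (m + 2)) * X)) + 10 * Θ * (2 * (M * ρ ^ m * c0) / δ))
      ≤ 4 / lam * (τ * (4 * θ * Q) * X + 160 * Θ / (θ * Ac) * (M * X)) := by gcongr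
    _ = τ * (4 / lam * (4 * θ * Q)) * X + (4 / lam * (160 * Θ / (θ * Ac))) * (M * X) := by ring
    _ ≤ τ * (1 / 2) * (M * X) + (1 / 2) * (M * X) := by gcongr
    _ = (τ + 1) / 2 * (M * ρ ^ (m + 1) * c1) := by rw [hXd]; ring

theorem growth_step {n : ℕ} {ι : Type*} [Finite ι] {w : ι → Pt n → ℝ} (hw : ∀ A, Sm (w A))
    {U : Set (Pt n)} (hU : IsOpen U) (idx : Fin n → Fin n → ι)
    (hidx : ∀ r s, w (idx r s) = w (idx s r)) {f : ι → Pt n → ℝ}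
    (heq : ∀ A, ∀ x ∈ U, ∑ r, ∑ s, w (idx r s) x * pd r (pd s (w A)) x = f A x)
    {x0 : Pt n} {R lam Θ K M P θ Ac : ℝ} (hR1 : R ≤ 1)
    (hRU : ∀ x, en (x - x0) < R → x ∈ U) (hlam : 0 < lam) (hlT : lam ≤ Θ) (hK : 0 ≤ K) (hM : 1 ≤ M)
    (hP0 : 0 ≤ P)
    (hell : ∀ x, en (x - x0) < R → ∀ ξ : Pt n, lam * ∑ r, ξ r ^ 2 ≤ ∑ r, ∑ s, w (idx r s) x * ξ r * ξ s)
    (htr : ∀ x, en (x - x0) < R → ∑ r, w (idx r r) x ≤ Θ)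
    (hlip : ∀ x y, en (x - x0) < R → en (y - x0) < R → ∀ ξ : Pt n,
      |∑ r, ∑ s, (w (idx r s) y - w (idx r s) x) * ξ r * ξ s| ≤ K * en (x - y) * ∑ r, ξ r ^ 2)
    (hP : ∀ A, ∀ (k : ℕ) (τ ρ : ℝ) (x : Pt n), 1 ≤ k → 1 ≤ τ → 0 ≤ ρ →
      (∀ s ∈ Gen w, Bd k τ ρ (4 * M) x s) → Bd k τ ρ P x (f A))
    (hθ : 0 < θ) (hθ2 : θ ≤ 1 / 2) (hθ3 : 4 * K * θ ≤ lam) (hθ4 : 12 * n * K * θ ≤ lam)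
    (hθ5 : 4 / lam * (4 * θ * (P + 8 * n ^ 2 * M ^ 2)) ≤ 1 / 2)
    (hA1 : 1 ≤ Ac) (hA2 : 4 / lam * (160 * Θ) ≤ 1 / 2 * (θ * Ac))
    {m : ℕ} {τ : ℝ} (hτ : 1 ≤ τ)
    (hy : ∀ x, en (x - x0) < R → Hy w (m + 1) τ (Ac / (R - en (x - x0))) M x) :
    ∀ x, en (x - x0) < R → Hy w (m + 1) ((τ + 1) / 2) (Ac / (R - en (x - x0))) M x := by
  intro x hx
  refine ⟨(hy x hx).1, fun A J i hJ => ?_⟩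
  rcases Nat.lt_or_ge J.length (m + 1) with hlt | hge
  · have := (hy x hx).2 A J i hJ
    rwa [if_neg (by omega)] at this ⊢
  have hJk : J.length = m + 1 := le_antisymm hJ hge
  rw [if_pos hJk]
  set d := R - en (x - x0) with hd
  have hd0 : 0 < d := by linarith
  have hd1 : d ≤ 1 := by have := en_nonneg (x - x0); linarith
  have hm1 : (0:ℝ) < m + 1 + 1 := by positivity
  set δ := θ * d / (m + 1 + 1) with hδ
  have hδ0 : 0 < δ := by positivity
  have hδd : δ ≤ θ * d := by
    rw [hδ]; apply div_le_self (by positivity); have : (0:ℝ) ≤ m := Nat.cast_nonneg _; linarith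
  have hδθ : δ ≤ θ := hδd.trans (by nlinarith)
  have hΘ : 0 < Θ := by linarith
  set ρ := Ac / d with hρ
  have hρ1 : 1 ≤ ρ := by rw [hρ, le_div_iff₀ hd0]; linarith
  have hball : ∀ y, en (y - x) ≤ δ → en (y - x0) < R ∧ d * (1 - θ / ((m + 1 : ℕ) + 1)) ≤ R - en (y - x0) := by
    intro y hy'
    have h1 := en_tri y x x0
    have e : d * (1 - θ / ((m + 1 : ℕ) + 1)) = d - δ := by rw [hδ]; push_cast; ring
    rw [e]
    constructor
    · nlinarith
    · linarith
  have hc1 := cc_pos (m + 1)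
  have hc0 := cc_pos m
  have hn0 : (0:ℝ) ≤ n := Nat.cast_nonneg _
  have hm0 : (0:ℝ) ≤ m := Nat.cast_nonneg _
  set Q := P + 8 * n ^ 2 * M ^ 2 with hQ
  have hQ0 : 0 ≤ Q := by positivity
  have hgrad := grad_est (fun x r s => w (idx r s) x) (pdL J (w A)) ((hw A).pdL J) x δ lam Θ K
    (2 * τ * (Q * (m + 2)) * (ρ ^ (m + 1) * cc (m + 1))) (2 * (M * ρ ^ m * cc m))
    hδ0 hlam hK (by positivity) (by positivity)
    (fun x r s => by rw [hidx]) (fun y h => hell y (hball y h).1) (fun y h => htr y (hball y h).1) hlT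
    (fun y z h h' => hlip y z (hball y h).1 (hball z h').1)
    (by nlinarith [mul_le_mul_of_nonneg_left hδθ hK])
    (by nlinarith [mul_le_mul_of_nonneg_left hδθ (mul_nonneg hn0 hK)])
    (by
      intro y h
      obtain ⟨hb1, hb2⟩ := hball y h
      cases J with
      | nil => simp at hJk
      | cons j J' =>
        simp at hJk
        have h1 := (hy y hb1).2 A J' j (by omega)
        rw [if_neg (by omega), hJk] at h1
        have h2 := pow_ratio (m := m) (k := m + 1) (by omega) hθ hθ2 hd0 (by linarith : 0 < Ac) hb2
        refine h1.trans ?_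
        rw [one_mul]
        calc M * (Ac / (R - en (y - x0))) ^ m * cc m ≤ M * (2 * (Ac / d) ^ m) * cc m := by gcongr
          _ = _ := by ring)
    (by
      intro y h
      obtain ⟨hb1, hb2⟩ := hball y h
      have hdy : 0 < R - en (y - x0) := by linarith
      have hρy : 1 ≤ Ac / (R - en (y - x0)) := by
        rw [le_div_iff₀ hdy]; have := en_nonneg (y - x0); linarith
      have h0 := hy y hb1
      have h1 := Lv_bd hw hU idx A (heq A) (hRU y hb1) hτ hρy (by linarith) h0
        (hP A (m + 1) τ _ y (by omega) hτ (by linarith) (gen_bd hτ hρy (by linarith) h0)) J hJk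
      have h2 := pow_ratio (m := m + 1) (k := m + 1) le_rfl hθ hθ2 hd0 (by linarith : 0 < Ac) hb2
      refine h1.trans ?_
      have h3 : P + 8 * n ^ 2 * M ^ 2 * ((m + 1 : ℕ) : ℝ) ≤ Q * (m + 2) := by
        rw [hQ]; push_cast
        have : 0 ≤ (n:ℝ) ^ 2 * M ^ 2 := by positivity
        nlinarith
      calc τ * ((P + 8 * n ^ 2 * M ^ 2 * ((m + 1 : ℕ) : ℝ)) * ((Ac / (R - en (y - x0))) ^ (m + 1) * cc (m + 1)))
          ≤ τ * ((Q * (m + 2)) * ((2 * (Ac / d) ^ (m + 1)) * cc (m + 1))) := by gcongr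
        _ = _ := by ring)
    i
  have e1 : pdL (i :: J) (w A) x = pd i (pdL J (w A)) x := by
    rw [pd_pdL J (hw A)]; rfl
  rw [e1, hJk]
  refine hgrad.trans ?_
  exact step_arith hτ hQ0 hM hθ hd0 hd1 hΘ hlam (by linarith) hδ hρ hc1 hc0 (cc_pred m) hρ1 hθ5 hA2

theorem growth_iter {n : ℕ} {ι : Type*} [Finite ι] {w : ι → Pt n → ℝ} (hw : ∀ A, Sm (w A))
    {x0 : Pt n} {R M Ac : ℝ} (hR1 : R ≤ 1) (hM : 1 ≤ M) (hA1 : 1 ≤ Ac)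
    (h0 : ∀ x, en (x - x0) < R → (∀ A, |w A x| ≤ M) ∧ ∀ A i, |pd i (w A) x| ≤ M)
    (step : ∀ (m : ℕ) (τ : ℝ), 1 ≤ τ →
      (∀ x, en (x - x0) < R → Hy w (m + 1) τ (Ac / (R - en (x - x0))) M x) →
      ∀ x, en (x - x0) < R → Hy w (m + 1) ((τ + 1) / 2) (Ac / (R - en (x - x0))) M x) (k : ℕ) :
    ∀ x, en (x - x0) < R → Hy w k 1 (Ac / (R - en (x - x0))) M x := by
  induction k with
  | zero =>
    intro x hx
    refine ⟨(h0 x hx).1, fun A J i hJ => ?_⟩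
    have : J = [] := by simpa using hJ
    subst this
    have := (h0 x hx).2 A i
    simpa [pdL, cc] using this
  | succ k ih =>
    obtain ⟨B, hB0, hB⟩ := exists_bd w hw _ (isCompact_eball x0 R) (k + 2)
    have hc := cc_pos (k + 1)
    set τ0 := 1 + B / cc (k + 1) with hτ0
    have hτ1 : 0 ≤ B / cc (k + 1) := by positivity
    have hseq : ∀ j : ℕ, ∀ x, en (x - x0) < R →
        Hy w (k + 1) (1 + (B / cc (k + 1)) * (1 / 2) ^ j) (Ac / (R - en (x - x0))) M x := by
      intro j
      induction j with
      | zero =>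
        intro x hx
        refine ⟨(h0 x hx).1, fun A J i hJ => ?_⟩
        rcases Nat.lt_or_ge J.length (k + 1) with hlt | hge
        · have := (ih x hx).2 A J i (by omega)
          rw [if_neg (by omega)]
          simpa using this
        · have hJk : J.length = k + 1 := le_antisymm hJ hge
          rw [if_pos hJk, hJk]
          have hd0 : 0 < R - en (x - x0) := by linarith
          have hρ1 : 1 ≤ Ac / (R - en (x - x0)) := by
            rw [le_div_iff₀ hd0]; have := en_nonneg (x - x0); linarith
          refine (hB x hx.le A (i :: J) (by simp [hJk])).trans ?_
          have h1 : 1 ≤ (Ac / (R - en (x - x0))) ^ (k + 1) := one_le_pow₀ hρ1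
          have h2 : cc (k + 1) ≤ M * (Ac / (R - en (x - x0))) ^ (k + 1) * cc (k + 1) := by
            have : 1 ≤ M * (Ac / (R - en (x - x0))) ^ (k + 1) := one_le_mul_of_one_le_of_one_le hM h1
            nlinarith
          calc B = (B / cc (k + 1)) * cc (k + 1) := by field_simp
            _ ≤ (1 + (B / cc (k + 1)) * (1 / 2) ^ 0) * (M * (Ac / (R - en (x - x0))) ^ (k + 1) * cc (k + 1)) := by
              refine mul_le_mul ?_ h2 hc.le ?_
              · simp
              · simp; linarith
      | succ j ihj =>
        have := step k _ (by
          have : 0 ≤ (B / cc (k + 1)) * (1 / 2) ^ j := by positivity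
          linarith) ihj
        have e : (1 + B / cc (k + 1) * (1 / 2) ^ j + 1) / 2 = 1 + B / cc (k + 1) * (1 / 2) ^ (j + 1) := by
          ring
        rwa [e] at this
    intro x hx
    refine ⟨(h0 x hx).1, fun A J i hJ => ?_⟩
    have ht : Tendsto (fun j : ℕ => (if J.length = k + 1 then (1 + (B / cc (k + 1)) * (1 / 2) ^ j) else 1) *
        (M * (Ac / (R - en (x - x0))) ^ J.length * cc J.length)) atTop
        (nhds ((if J.length = k + 1 then (1 + (B / cc (k + 1)) * 0) else 1) *
        (M * (Ac / (R - en (x - x0))) ^ J.length * cc J.length))) := by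
      refine Tendsto.mul_const _ ?_
      split_ifs
      · refine Tendsto.const_add _ (Tendsto.const_mul _ ?_)
        exact tendsto_pow_atTop_nhds_zero_of_lt_one (by norm_num) (by norm_num)
      · exact tendsto_const_nhds
    simp only [mul_zero, add_zero] at ht
    exact ge_of_tendsto' ht (fun j => (hseq j x hx).2 A J i hJ)


theorem norm_le_en {n : ℕ} (v : Pt n) : ‖v‖ ≤ en v :=
  (pi_norm_le_iff_of_nonneg (en_nonneg v)).2 fun i => abs_le_en v i

theorem Bd.mono {n : ℕ} {k : ℕ} {τ ρ P P' : ℝ} {x : Pt n} {f : Pt n → ℝ} (hτ : 1 ≤ τ) (hρ : 0 ≤ ρ)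
    (hP : P ≤ P') (h : Bd k τ ρ P x f) : Bd k τ ρ P' x f := by
  intro J hJ
  refine (h J hJ).trans ?_
  have h1 : 0 ≤ (if J.length = k then τ else 1) := by split_ifs <;> linarith
  have h2 := (cc_pos J.length).le
  gcongr

theorem exists_lip {n : ℕ} {ι : Type*} [Finite ι] (w : ι → Pt n → ℝ) (hw : ∀ A, Sm (w A)) (x0 : Pt n)
    (R : ℝ) : ∃ B : ℝ, 0 ≤ B ∧ ∀ A x y, en (x - x0) < R → en (y - x0) < R →
      |w A y - w A x| ≤ B * en (x - y) := by
  have h1 : ∀ A, ∃ B : ℝ, ∀ x ∈ Metric.closedBall x0 R, ‖fderiv ℝ (w A) x‖ ≤ B := fun A =>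
    (isCompact_closedBall x0 R).exists_bound_of_continuousOn
      ((hw A).continuous_fderiv (by simp)).continuousOn
  choose B hB using h1
  obtain ⟨C, hC⟩ := (Set.finite_range B).bddAbove
  refine ⟨max C 0, le_max_right _ _, fun A x y hx hy => ?_⟩
  have hmem : ∀ z : Pt n, en (z - x0) < R → z ∈ Metric.closedBall x0 R := fun z hz => by
    rw [mem_closedBall_iff_norm]; exact (norm_le_en _).trans hz.le
  have := (convex_closedBall x0 R).norm_image_sub_le_of_norm_fderiv_le (𝕜 := ℝ) (f := w A)
    (C := max C 0) (fun z _ => (hw A).diff z)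
    (fun z hz => (hB A z hz).trans ((hC ⟨A, rfl⟩).trans (le_max_left _ _))) (hmem x hx) (hmem y hy)
  refine this.trans (mul_le_mul_of_nonneg_left ?_ (le_max_right _ _))
  rw [en_sub_comm]; exact norm_le_en _

theorem quad_le {n : ℕ} (D : Fin n → Fin n → ℝ) (b : ℝ) (hD : ∀ r s, |D r s| ≤ b) (hb : 0 ≤ b) (ξ : Pt n) :
    |∑ r, ∑ s, D r s * ξ r * ξ s| ≤ b * n * ∑ r, ξ r ^ 2 := by
  have h1 : |∑ r, ∑ s, D r s * ξ r * ξ s| ≤ ∑ r, ∑ s, b * (|ξ r| * |ξ s|) := by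
    refine (Finset.abs_sum_le_sum_abs _ _).trans (Finset.sum_le_sum fun r _ => ?_)
    refine (Finset.abs_sum_le_sum_abs _ _).trans (Finset.sum_le_sum fun s _ => ?_)
    rw [abs_mul, abs_mul, mul_assoc]
    exact mul_le_mul_of_nonneg_right (hD r s) (by positivity)
  have h2 : ∑ r, ∑ s, b * (|ξ r| * |ξ s|) = b * (∑ r, |ξ r|) ^ 2 := by
    rw [sq, Finset.sum_mul_sum, Finset.mul_sum]
    simp only [Finset.mul_sum]
  have h3 := sq_sum_le_card_mul_sum_sq (s := (Finset.univ : Finset (Fin n))) (f := fun r => |ξ r|)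
  simp only [sq_abs, Finset.card_univ, Fintype.card_fin] at h3
  rw [h2] at h1
  refine h1.trans ((mul_le_mul_of_nonneg_left h3 hb).trans (le_of_eq (by ring)))

theorem exists_ell {n : ℕ} (a : Fin n → Fin n → Pt n → ℝ) (ha : ∀ r s, Continuous (a r s))
    (hpos : ∀ x (ξ : Pt n), ξ ≠ 0 → 0 < ∑ r, ∑ s, a r s x * ξ r * ξ s) (x0 : Pt n) (R : ℝ) :
    ∃ lam : ℝ, 0 < lam ∧ ∀ x, en (x - x0) ≤ R → ∀ ξ : Pt n,
      lam * ∑ r, ξ r ^ 2 ≤ ∑ r, ∑ s, a r s x * ξ r * ξ s := by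
  have hS : IsCompact {ξ : Pt n | en ξ = 1} := by
    refine (isCompact_eball (0 : Pt n) 1).of_isClosed_subset (isClosed_eq en_continuous continuous_const) ?_
    intro ξ hξ
    simp only [Set.mem_setOf_eq] at hξ ⊢
    simp [hξ]
  have hcont : Continuous (fun p : Pt n × Pt n => ∑ r, ∑ s, a r s p.1 * p.2 r * p.2 s) := by
    refine continuous_finsetSum _ fun r _ => continuous_finsetSum _ fun s _ => ?_
    exact (((ha r s).comp continuous_fst).mul ((continuous_apply r).comp continuous_snd)).mul
      ((continuous_apply s).comp continuous_snd)
  obtain ⟨lam, hlam, h⟩ := ((isCompact_eball x0 R).prod hS).exists_forall_le' hcont.continuousOn (a := 0)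
    (by
      rintro ⟨x, ξ⟩ ⟨_, hξ⟩
      refine hpos x ξ ?_
      rintro rfl
      simp [en_zero] at hξ)
  refine ⟨lam, hlam, fun x hx ξ => ?_⟩
  by_cases h0 : ξ = 0
  · subst h0; simp
  have hN : 0 < en ξ := lt_of_le_of_ne (en_nonneg _) (fun e => h0 (en_eq_zero e.symm))
  have h1 := h (x, (en ξ)⁻¹ • ξ) ⟨hx, by
    simp only [Set.mem_setOf_eq]; rw [en_smul, abs_of_pos (by positivity)]; field_simp⟩
  have e : ∑ r, ∑ s, a r s x * ((en ξ)⁻¹ • ξ) r * ((en ξ)⁻¹ • ξ) s =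
      ((en ξ)⁻¹) ^ 2 * ∑ r, ∑ s, a r s x * ξ r * ξ s := by
    rw [Finset.mul_sum]; refine Finset.sum_congr rfl fun r _ => ?_
    rw [Finset.mul_sum]; refine Finset.sum_congr rfl fun s _ => ?_
    simp; ring
  simp only at h1
  rw [e] at h1
  rw [← en_sq]
  have h2 := mul_le_mul_of_nonneg_right h1 (sq_nonneg (en ξ))
  refine h2.trans (le_of_eq ?_)
  field_simp

theorem growth {n : ℕ} {ι : Type*} [Finite ι] {w : ι → Pt n → ℝ} (hw : ∀ A, Sm (w A))
    {U : Set (Pt n)} (hU : IsOpen U) (idx : Fin n → Fin n → ι)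
    (hidx : ∀ r s, w (idx r s) = w (idx s r)) {f : ι → Pt n → ℝ}
    (hf : ∀ A, f A ∈ Algebra.adjoin ℝ (Gen w))
    (hpos : ∀ x (ξ : Pt n), ξ ≠ 0 → 0 < ∑ r, ∑ s, w (idx r s) x * ξ r * ξ s)
    (heq : ∀ A, ∀ x ∈ U, ∑ r, ∑ s, w (idx r s) x * pd r (pd s (w A)) x = f A x)
    {x0 : Pt n} (hx0 : x0 ∈ U) :
    ∃ R M Ac : ℝ, 0 < R ∧ 1 ≤ M ∧ 1 ≤ Ac ∧ ∀ k x, en (x - x0) < R →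
      Hy w k 1 (Ac / (R - en (x - x0))) M x := by
  cases nonempty_fintype ι
  obtain ⟨ε, hε, hεU⟩ := Metric.isOpen_iff.1 hU x0 hx0
  set R := min 1 ε with hR
  have hR0 : 0 < R := lt_min one_pos hε
  have hR1 : R ≤ 1 := min_le_left _ _
  have hRU : ∀ x, en (x - x0) < R → x ∈ U := fun x hx => hεU (by
    rw [mem_ball_iff_norm]; exact lt_of_le_of_lt (norm_le_en _) (hx.trans_le (min_le_right _ _)))
  obtain ⟨B, hB0, hB⟩ := exists_lip w hw x0 R
  obtain ⟨lam, hlam, hell⟩ := exists_ell (fun r s => w (idx r s)) (fun r s => (hw _).continuous) hpos x0 R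
  obtain ⟨M0, hM0, hM0'⟩ := exists_bd w hw _ (isCompact_eball x0 R) 0
  obtain ⟨M1, hM1, hM1'⟩ := exists_bd w hw _ (isCompact_eball x0 R) 1
  set M := 1 + M0 + M1 with hM
  have hM1le : 1 ≤ M := by linarith
  have hb0 : ∀ x, en (x - x0) < R → (∀ A, |w A x| ≤ M) ∧ ∀ A i, |pd i (w A) x| ≤ M := by
    intro x hx
    refine ⟨fun A => ?_, fun A i => ?_⟩
    · have := hM0' x hx.le A [] rfl
      simp only [pdL] at this; linarith
    · have := hM1' x hx.le A [i] rfl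
      simp only [pdL] at this; linarith
  have hPex := fun A => (Bd.adjoin (gen_sm hw) (hf A) (4 * M) (by linarith)).2
  choose P0 hP0 hP using hPex
  set P := ∑ A, P0 A with hPd
  have hPnn : 0 ≤ P := Finset.sum_nonneg fun A _ => hP0 A
  set K := B * n with hK
  have hn0 : (0:ℝ) ≤ n := Nat.cast_nonneg _
  have hKnn : 0 ≤ K := by positivity
  set Θ := lam + n * M with hΘ
  have hnM : 0 ≤ n * M := by positivity
  set Q := P + 8 * n ^ 2 * M ^ 2 with hQ
  have hQ0 : 0 ≤ Q := by positivity
  have hs1 : 0 ≤ 4 * K / lam := by positivity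
  have hs2 : 0 ≤ 12 * n * K / lam := by positivity
  have hs3 : 0 ≤ 4 / lam * (8 * Q) := by positivity
  set D := 2 + 4 * K / lam + 12 * n * K / lam + 4 / lam * (8 * Q) with hD
  have hDpos : 0 < D := by positivity
  set θ := 1 / D with hθ
  have hθ0 : 0 < θ := by positivity
  have hθD : θ * D = 1 := by rw [hθ]; field_simp
  have hθle : ∀ c, c ≤ D → c * θ ≤ 1 := fun c hc => by nlinarith
  set Ac := 1 + 4 / lam * (320 * Θ) / θ with hAc
  have hΘ0 : 0 < Θ := by linarith
  have hAc1 : 1 ≤ Ac := by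
    have : 0 ≤ 4 / lam * (320 * Θ) / θ := by positivity
    linarith
  refine ⟨R, M, Ac, hR0, hM1le, hAc1, fun k => ?_⟩
  refine growth_iter hw hR1 hM1le hAc1 hb0 (fun m τ hτ => ?_) k
  refine growth_step hw hU idx hidx heq hR1 hRU hlam (by linarith : lam ≤ Θ) hKnn hM1le hPnn
    (fun x hx => hell x hx.le) ?_ ?_ ?_ hθ0 ?_ ?_ ?_ ?_ hAc1 ?_ hτ
  · intro x hx
    calc ∑ r, w (idx r r) x ≤ ∑ r : Fin n, M := Finset.sum_le_sum fun r _ => (le_abs_self _).trans ((hb0 x hx).1 _)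
      _ = n * M := by simp
      _ ≤ Θ := by linarith
  · intro x y hx hy ξ
    refine (quad_le _ (B * en (x - y)) (fun r s => hB _ x y hx hy) (mul_nonneg hB0 (en_nonneg _)) ξ).trans
      (le_of_eq (by rw [hK]; ring))
  · intro A k τ ρ x hk hτ hρ h
    refine (hP A k τ ρ x hk hτ hρ h).mono hτ hρ ?_
    exact Finset.single_le_sum (f := P0) (fun A _ => hP0 A) (Finset.mem_univ A)
  · have := hθle 2 (by linarith); linarith
  · have := hθle (4 * K / lam) (by linarith)
    have h2 : 4 * K / lam * θ = 4 * K * θ / lam := by ring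
    rwa [h2, div_le_one hlam] at this
  · have := hθle (12 * n * K / lam) (by linarith)
    have h2 : 12 * n * K / lam * θ = 12 * n * K * θ / lam := by ring
    rwa [h2, div_le_one hlam] at this
  · have := hθle (4 / lam * (8 * Q)) (by linarith)
    have h2 : 4 / lam * (4 * θ * Q) = 1 / 2 * (4 / lam * (8 * Q) * θ) := by ring
    rw [h2]; linarith
  · have h2 : 1 / 2 * (θ * Ac) = 1 / 2 * θ + 4 / lam * (160 * Θ) := by
      rw [hAc]; field_simp; ring
    rw [h2]; linarith


theorem iter_le {n : ℕ} (k : ℕ) {f : Pt n → ℝ} (hf : Sm f) (y : Pt n) (B : ℝ)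
    (hB : ∀ J : List (Fin n), J.length = k → |pdL J f y| ≤ B) (m : Fin k → Pt n) :
    |iteratedFDeriv ℝ k f y m| ≤ (n : ℝ) ^ k * B * ∏ i, ‖m i‖ := by
  induction k generalizing f with
  | zero =>
    have := hB [] rfl
    simpa [pdL] using this
  | succ k ih =>
    rw [iteratedFDeriv_succ_apply_right]
    have hs : ContDiff ℝ k (fderiv ℝ f) := (hf.fderiv_right (m := (⊤ : ℕ∞)) (by simp)).of_le (by exact_mod_cast le_top)
    set v := m (Fin.last k) with hv
    change |iteratedFDeriv ℝ k (fun y => fderiv ℝ f y) y (fun i : Fin k => m i.castSucc) v| ≤ _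
    have e1 : iteratedFDeriv ℝ k (fun y => fderiv ℝ f y) y (fun i : Fin k => m i.castSucc) v =
        ∑ r, v r * iteratedFDeriv ℝ k (pd r f) y (fun i : Fin k => m i.castSucc) := by
      have h1 : ∀ v : Pt n, iteratedFDeriv ℝ k (fun y => fderiv ℝ f y) y (fun i : Fin k => m i.castSucc) v =
          iteratedFDeriv ℝ k (fun y => fderiv ℝ f y v) y (fun i : Fin k => m i.castSucc) := by
        intro v
        have h2 := (ContinuousLinearMap.apply ℝ ℝ v).iteratedFDeriv_comp_left (f := fderiv ℝ f) (x := y)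
          (i := k) hs.contDiffAt le_rfl
        have h3 : (ContinuousLinearMap.apply ℝ ℝ v) ∘ fderiv ℝ f = fun y => fderiv ℝ f y v := rfl
        rw [h3] at h2
        rw [h2]; rfl
      have h4 : v = ∑ r, v r • (Pi.single r 1 : Pt n) := by
        conv_lhs => rw [← Finset.univ_sum_single v]
        refine Finset.sum_congr rfl fun r _ => ?_
        rw [← Pi.single_smul]; simp
      conv_lhs => rw [h4]
      rw [map_sum]
      refine Finset.sum_congr rfl fun r _ => ?_
      rw [map_smul, h1]; rfl
    rw [e1]
    have h5 : ∀ r, |v r * iteratedFDeriv ℝ k (pd r f) y (fun i : Fin k => m i.castSucc)| ≤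
        ‖v‖ * ((n : ℝ) ^ k * B * ∏ i : Fin k, ‖m i.castSucc‖) := by
      intro r
      rw [abs_mul]
      exact mul_le_mul (norm_le_pi_norm v r)
        (ih (hf.pd r) (fun J hJ => hB (r :: J) (by simp [hJ])) (fun i : Fin k => m i.castSucc)) (abs_nonneg _) (norm_nonneg _)
    refine (Finset.abs_sum_le_sum_abs _ _).trans ((Finset.sum_le_sum fun r _ => h5 r).trans (le_of_eq ?_))
    rw [Fin.prod_univ_castSucc]
    simp only [Finset.sum_const, Finset.card_univ, Fintype.card_fin, nsmul_eq_mul, hv]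
    ring

theorem iter_line {n : ℕ} {f : Pt n → ℝ} (hf : Sm f) (x h : Pt n) (k : ℕ) :
    iteratedDeriv k (fun t : ℝ => f (x + t • h)) = fun t => iteratedFDeriv ℝ k f (x + t • h) (fun _ => h) := by
  induction k with
  | zero => funext t; simp
  | succ k ih =>
    rw [iteratedDeriv_succ, ih]
    funext t
    have hd : DifferentiableAt ℝ (iteratedFDeriv ℝ k f) (x + t • h) :=
      (hf.differentiable_iteratedFDeriv (by exact_mod_cast ENat.natCast_lt_top k)) _
    have hl : HasDerivAt (fun t : ℝ => x + t • h) h t := by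
      simpa using ((hasDerivAt_id t).smul_const h).const_add x
    have h1 := hd.hasFDerivAt.comp_hasDerivAt t hl
    have h2 := ((ContinuousMultilinearMap.apply ℝ (fun _ : Fin k => Pt n) ℝ
      (fun _ => h)).hasFDerivAt).comp_hasDerivAt t h1
    rw [iteratedFDeriv_succ_apply_left]
    exact h2.deriv

theorem analytic_of_bd {n : ℕ} {f : Pt n → ℝ} (hf : Sm f) (x0 : Pt n) (r C A : ℝ) (hr : 0 < r)
    (hC : 0 ≤ C) (hA : 0 ≤ A)
    (hb : ∀ y, ‖y - x0‖ < r → ∀ J : List (Fin n), |pdL J f y| ≤ C * A ^ J.length * J.length.factorial) :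
    AnalyticAt ℝ f x0 := by
  set q := n * A + 1 with hq
  have hq0 : 0 < q := by positivity
  have hnA : n * A ≤ q := by linarith
  have hit : ∀ k y, ‖y - x0‖ < r → ‖iteratedFDeriv ℝ k f y‖ ≤ C * q ^ k * k.factorial := by
    intro k y hy
    refine ContinuousMultilinearMap.opNorm_le_bound (by positivity) fun m => ?_
    refine (iter_le k hf y (C * A ^ k * k.factorial) (fun J hJ => hJ ▸ hb y hy J) m).trans ?_
    refine mul_le_mul_of_nonneg_right ?_ (Finset.prod_nonneg fun _ _ => norm_nonneg _)
    calc (n : ℝ) ^ k * (C * A ^ k * k.factorial) = C * (n * A) ^ k * k.factorial := by rw [mul_pow]; ring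
      _ ≤ _ := by gcongr
  set p : FormalMultilinearSeries ℝ (Pt n) ℝ := fun k => ((k.factorial : ℝ)⁻¹) • iteratedFDeriv ℝ k f x0 with hp
  have hpn : ∀ k, ‖p k‖ ≤ C * q ^ k := by
    intro k
    simp only [hp]
    rw [norm_smul, Real.norm_of_nonneg (by positivity), inv_mul_le_iff₀ (by positivity)]
    refine (hit k x0 (by simpa using hr)).trans (le_of_eq (by ring))
  set δ : ℝ := min (r / 2) (1 / (2 * q)) with hδ
  have hδ0 : 0 < δ := by positivity
  have hδq : q * δ ≤ 1 / 2 := by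
    calc q * δ ≤ q * (1 / (2 * q)) := by gcongr; exact min_le_right _ _
      _ = _ := by field_simp
  refine ⟨p, ENNReal.ofReal δ, ?_, by simpa using hδ0, ?_⟩
  · refine p.le_radius_of_bound (r := Real.toNNReal δ) C fun k => ?_
    rw [Real.coe_toNNReal _ hδ0.le]
    calc ‖p k‖ * δ ^ k ≤ C * q ^ k * δ ^ k := by gcongr; exact hpn k
      _ = C * (q * δ) ^ k := by rw [mul_pow]; ring
      _ ≤ C * 1 := by
        gcongr
        exact pow_le_one₀ (by positivity) (by linarith)
      _ = C := mul_one _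
  · intro h hh
    have hhδ : ‖h‖ < δ := by
      rw [Metric.eball_ofReal] at hh
      simpa using hh
    have hqh : q * ‖h‖ ≤ 1 / 2 := (by gcongr : q * ‖h‖ ≤ q * δ).trans hδq
    have hterm : ∀ k, ‖p k fun _ => h‖ ≤ C * (1 / 2) ^ k := by
      intro k
      calc ‖p k fun _ => h‖ ≤ ‖p k‖ * ‖h‖ ^ k := by
            refine ((p k).le_opNorm _).trans (le_of_eq (by simp))
        _ ≤ C * q ^ k * ‖h‖ ^ k := by gcongr; exact hpn k
        _ = C * (q * ‖h‖) ^ k := by rw [mul_pow]; ring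
        _ ≤ _ := by gcongr
    have hsum : Summable (fun k => p k fun _ => h) :=
      Summable.of_norm_bounded ((summable_geometric_of_lt_one (by norm_num) (by norm_num)).mul_left C) hterm
    set φ : ℝ → ℝ := fun t => f (x0 + t • h) with hφ
    have hφs : ContDiff ℝ (⊤ : ℕ∞) φ :=
      ContDiff.comp hf (contDiff_const.add (contDiff_id.smul contDiff_const))
    have hu : UniqueDiffOn ℝ (Set.Icc (0:ℝ) 1) := uniqueDiffOn_Icc one_pos
    have hw : ∀ k : ℕ, ∀ t ∈ Set.Icc (0:ℝ) 1, iteratedDerivWithin k φ (Set.Icc 0 1) t =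
        iteratedFDeriv ℝ k f (x0 + t • h) (fun _ => h) := by
      intro k t ht
      rw [iteratedDerivWithin_eq_iteratedDeriv hu ((hφs.of_le (by exact_mod_cast le_top)).contDiffAt) ht,
        iter_line hf]
    have hrem : ∀ k : ℕ, ‖f (x0 + h) - ∑ i ∈ Finset.range (k + 1), p i fun _ => h‖ ≤
        C * (((k + 1 : ℕ) : ℝ) * (1 / 2) ^ (k + 1)) := by
      intro k
      have h1 := taylor_mean_remainder_bound (f := φ) (a := 0) (b := 1) (x := 1)
        (C := C * (1 / 2) ^ (k + 1) * (k + 1).factorial) (n := k) zero_le_one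
        (hφs.of_le (by exact_mod_cast le_top)).contDiffOn (by simp) (by
          intro t ht
          rw [hw _ t ht]
          have hy : ‖x0 + t • h - x0‖ < r := by
            rw [add_sub_cancel_left, norm_smul, Real.norm_of_nonneg ht.1]
            have : δ ≤ r / 2 := min_le_left _ _
            have := ht.2
            nlinarith [norm_nonneg h]
          calc _ ≤ ‖iteratedFDeriv ℝ (k + 1) f (x0 + t • h)‖ * ‖h‖ ^ (k + 1) := by
                refine (ContinuousMultilinearMap.le_opNorm _ _).trans (le_of_eq (by simp))
            _ ≤ C * q ^ (k + 1) * (k + 1).factorial * ‖h‖ ^ (k + 1) := by gcongr; exact hit _ _ hy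
            _ = C * (q * ‖h‖) ^ (k + 1) * (k + 1).factorial := by rw [mul_pow]; ring
            _ ≤ _ := by gcongr)
      rw [taylor_within_apply] at h1
      have e : ∑ i ∈ Finset.range (k + 1), ((i.factorial : ℝ)⁻¹ * (1 - 0) ^ i) •
          iteratedDerivWithin i φ (Set.Icc 0 1) 0 = ∑ i ∈ Finset.range (k + 1), p i fun _ => h := by
        refine Finset.sum_congr rfl fun i _ => ?_
        rw [hw i 0 (by simp)]
        simp [hp]
      rw [e] at h1
      simp only [hφ, one_smul, sub_zero, one_pow, mul_one] at h1
      refine h1.trans (le_of_eq ?_)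
      rw [Nat.factorial_succ]; push_cast; field_simp
    have hlim : Tendsto (fun k : ℕ => ∑ i ∈ Finset.range (k + 1), p i fun _ => h) atTop (nhds (f (x0 + h))) := by
      rw [tendsto_iff_norm_sub_tendsto_zero]
      refine squeeze_zero (g := fun k : ℕ => C * (((k + 1 : ℕ) : ℝ) * (1 / 2) ^ (k + 1)))
        (fun _ => norm_nonneg _) (fun k => (norm_sub_rev _ _).trans_le (hrem k)) ?_
      have := (tendsto_self_mul_const_pow_of_lt_one (r := (1/2 : ℝ)) (by norm_num) (by norm_num)).comp
        (tendsto_add_atTop_nat 1)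
      simpa using this.const_mul C
    have hlim2 := hsum.hasSum.tendsto_sum_nat.comp (tendsto_add_atTop_nat 1)
    have : ∑' k, (p k fun _ => h) = f (x0 + h) := tendsto_nhds_unique hlim2 hlim
    rw [← this]; exact hsum.hasSum

theorem analytic_main {n : ℕ} {ι : Type*} [Finite ι] {w : ι → Pt n → ℝ} (hw : ∀ A, Sm (w A))
    {U : Set (Pt n)} (hU : IsOpen U) (idx : Fin n → Fin n → ι)
    (hidx : ∀ r s, w (idx r s) = w (idx s r)) {f : ι → Pt n → ℝ}
    (hf : ∀ A, f A ∈ Algebra.adjoin ℝ (Gen w))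
    (hpos : ∀ x (ξ : Pt n), ξ ≠ 0 → 0 < ∑ r, ∑ s, w (idx r s) x * ξ r * ξ s)
    (heq : ∀ A, ∀ x ∈ U, ∑ r, ∑ s, w (idx r s) x * pd r (pd s (w A)) x = f A x) (A : ι) :
    AnalyticOnNhd ℝ (w A) U := by
  intro x0 hx0
  obtain ⟨R, M, Ac, hR, hM, hA, h⟩ := growth hw hU idx hidx hf hpos heq hx0
  have hopen : ∀ᶠ y in nhds x0, en (y - x0) < R / 2 := by
    have hc : Continuous fun y : Pt n => en (y - x0) := en_continuous.comp (continuous_id.sub continuous_const)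
    refine hc.continuousAt.eventually_lt continuousAt_const ?_
    simp [en_zero, hR]
  obtain ⟨r, hr, hrb⟩ := Metric.eventually_nhds_iff.1 hopen
  refine analytic_of_bd (hw A) x0 r M (1 + Ac / (R / 2)) hr (by linarith) (by positivity) ?_
  intro y hy J
  have hy2 := hrb (by rwa [dist_eq_norm])
  have hA1 : 1 ≤ 1 + Ac / (R / 2) := by
    have : 0 ≤ Ac / (R / 2) := by positivity
    linarith
  cases J with
  | nil =>
    have := (h 0 y (by linarith)).1 A
    simpa [pdL] using this
  | cons i J =>
    have h1 := (h J.length y (by linarith)).2 A J i le_rfl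
    have hρ : Ac / (R - en (y - x0)) ≤ 1 + Ac / (R / 2) := by
      have : Ac / (R - en (y - x0)) ≤ Ac / (R / 2) := by
        gcongr; linarith
      linarith
    have hρ0 : 0 ≤ Ac / (R - en (y - x0)) := div_nonneg (by linarith) (by linarith)
    have hcc : cc J.length ≤ (J.length + 1).factorial := by
      unfold cc
      have h2 : (J.length.factorial : ℝ) ≤ (J.length + 1).factorial := by
        exact_mod_cast Nat.factorial_le (Nat.le_succ _)
      refine (div_le_self (by positivity) ?_).trans h2
      have : (0:ℝ) ≤ J.length := Nat.cast_nonneg _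
      nlinarith
    have hc0 := (cc_pos J.length).le
    simp only [List.length_cons]
    rw [if_pos rfl, one_mul] at h1
    refine h1.trans ?_
    have h3 : (Ac / (R - en (y - x0))) ^ J.length ≤ (1 + Ac / (R / 2)) ^ (J.length + 1) :=
      (pow_le_pow_left₀ hρ0 hρ _).trans (pow_le_pow_right₀ hA1 (Nat.le_succ _))
    gcongr


theorem Sm.sub' {n : ℕ} {f h : Pt n → ℝ} (hf : Sm f) (hh : Sm h) : Sm (f - h) := ContDiff.sub hf hh
theorem Sm.smul' {n : ℕ} {f : Pt n → ℝ} (c : ℝ) (hf : Sm f) : Sm (c • f) := ContDiff.const_smul c hf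

theorem pd_sub {n : ℕ} {f h : Pt n → ℝ} (hf : Sm f) (hh : Sm h) (i : Fin n) :
    pd i (f - h) = pd i f - pd i h := by
  funext x; unfold pd
  rw [fderiv_sub (hf.diff x) (hh.diff x)]; rfl

theorem pd_smul {n : ℕ} {f : Pt n → ℝ} (hf : Sm f) (c : ℝ) (i : Fin n) :
    pd i (c • f) = c • pd i f := by
  funext x; unfold pd
  rw [fderiv_const_smul (hf.diff x)]; rfl

theorem Sm.prod' {n : ℕ} {ι : Type*} (s : Finset ι) {f : ι → Pt n → ℝ} (hf : ∀ A, Sm (f A)) :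
    Sm (fun x => ∏ A ∈ s, f A x) := contDiff_prod fun A _ => hf A

theorem Sm.det {n m : ℕ} (a : Fin m → Fin m → Pt n → ℝ) (ha : ∀ i j, Sm (a i j)) :
    Sm (fun x => Matrix.det (Matrix.of fun i j => a i j x)) := by
  simp only [Matrix.det_apply]
  refine ContDiff.sum fun σ _ => ?_
  exact ContDiff.const_smul _ (Sm.prod' _ fun i => ha (σ i) i)

/-- components of the metric and its inverse as functions -/
noncomputable def Gf {n : ℕ} (g : Pt n → Fin n → Fin n → ℝ) (i j : Fin n) : Pt n → ℝ := fun x => g x i j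
noncomputable def Hf {n : ℕ} (g : Pt n → Fin n → Fin n → ℝ) (i j : Fin n) : Pt n → ℝ := fun x => ginv g x i j
noncomputable def vf {n : ℕ} (u : Pt n → ℝ) : Pt n → ℝ := fun x => (u x)⁻¹

theorem det_ne {n : ℕ} {g : Pt n → Fin n → Fin n → ℝ} (hp : posdef g) (x : Pt n) :
    (Matrix.of (g x)).det ≠ 0 := by
  intro h0
  obtain ⟨v, hv, hv0⟩ := Matrix.exists_mulVec_eq_zero_iff.2 h0
  have := hp x v hv
  have e : ∑ i, ∑ j, g x i j * v i * v j = ∑ i, v i * (Matrix.of (g x)).mulVec v i := by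
    refine Finset.sum_congr rfl fun i _ => ?_
    simp only [Matrix.mulVec, dotProduct, Finset.mul_sum, Matrix.of_apply]
    exact Finset.sum_congr rfl fun j _ => by ring
  rw [e, hv0] at this
  simp at this

theorem Hf_sm {n : ℕ} {g : Pt n → Fin n → Fin n → ℝ} (hp : posdef g) (hs : smoothT g) (i j : Fin n) :
    Sm (Hf g i j) := by
  have hd : Sm (fun x => (Matrix.of (g x)).det) := Sm.det (fun i j x => g x i j) hs
  have ha : Sm (fun x => (Matrix.of (g x)).adjugate i j) := by
    simp only [Matrix.adjugate_apply]
    have := Sm.det (fun a b (x : Pt n) => if a = j then (Pi.single i (1:ℝ) : Fin n → ℝ) b else g x a b) (by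
      intro a b
      by_cases h : a = j
      · simp only [h, if_true]; exact Sm.const _
      · simp only [h, if_false]; exact hs a b)
    convert this using 3 with x
    ext a b
    by_cases h : a = j
    · subst h; simp
    · simp [Matrix.updateRow_apply, h]
  have : Hf g i j = fun x => ((Matrix.of (g x)).det)⁻¹ * (Matrix.of (g x)).adjugate i j := by
    funext x
    simp [Hf, ginv, Matrix.inv_def]
  rw [this]
  exact ContDiff.mul (ContDiff.inv hd (det_ne hp)) ha

theorem Hf_symm {n : ℕ} {g : Pt n → Fin n → Fin n → ℝ} (hg : symT g) (i j : Fin n) :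
    Hf g i j = Hf g j i := by
  funext x
  have : (Matrix.of (g x)).transpose = Matrix.of (g x) := by ext a b; exact hg x b a
  have h2 := Matrix.transpose_nonsing_inv (Matrix.of (g x))
  rw [this] at h2
  show (Matrix.of (g x))⁻¹ i j = (Matrix.of (g x))⁻¹ j i
  rw [← Matrix.transpose_apply (Matrix.of (g x))⁻¹ i j, h2]

theorem Gf_symm {n : ℕ} {g : Pt n → Fin n → Fin n → ℝ} (hg : symT g) (i j : Fin n) :
    Gf g i j = Gf g j i := funext fun x => hg x i j

theorem GH {n : ℕ} {g : Pt n → Fin n → Fin n → ℝ} (hp : posdef g) (i j : Fin n) :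
    ∑ k, Gf g i k * Hf g k j = fun _ => if i = j then 1 else 0 := by
  funext x
  have := congrFun (congrFun (Matrix.mul_nonsing_inv (Matrix.of (g x)) (isUnit_iff_ne_zero.2 (det_ne hp x))) i) j
  rw [Matrix.mul_apply, Matrix.one_apply] at this
  simpa [Gf, Hf, ginv] using this

theorem HG {n : ℕ} {g : Pt n → Fin n → Fin n → ℝ} (hp : posdef g) (i j : Fin n) :
    ∑ k, Hf g i k * Gf g k j = fun _ => if i = j then 1 else 0 := by
  funext x
  have := congrFun (congrFun (Matrix.nonsing_inv_mul (Matrix.of (g x)) (isUnit_iff_ne_zero.2 (det_ne hp x))) i) j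
  rw [Matrix.mul_apply, Matrix.one_apply] at this
  simpa [Gf, Hf, ginv] using this

theorem Hf_pos {n : ℕ} {g : Pt n → Fin n → Fin n → ℝ} (hp : posdef g) (x : Pt n) (ξ : Pt n)
    (hξ : ξ ≠ 0) : 0 < ∑ r, ∑ s, Hf g r s x * ξ r * ξ s := by
  set A := Matrix.of (g x)
  have hu : IsUnit A.det := isUnit_iff_ne_zero.2 (det_ne hp x)
  set η := A⁻¹.mulVec ξ with hη
  have h1 : A.mulVec η = ξ := by rw [hη, Matrix.mulVec_mulVec, Matrix.mul_nonsing_inv A hu, Matrix.one_mulVec]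
  have hη0 : η ≠ 0 := by rintro h; rw [h] at h1; simp at h1; exact hξ h1.symm
  have h2 := hp x η hη0
  have e1 : ∑ i, ∑ j, g x i j * η i * η j = ∑ i, η i * ξ i := by
    refine Finset.sum_congr rfl fun i _ => ?_
    conv_rhs => rw [← h1]
    simp only [Matrix.mulVec, dotProduct, Finset.mul_sum]
    exact Finset.sum_congr rfl fun j _ => by simp [A]; ring
  have e2 : ∑ r, ∑ s, Hf g r s x * ξ r * ξ s = ∑ i, η i * ξ i := by
    refine Finset.sum_congr rfl fun i _ => ?_
    rw [hη]
    simp only [Matrix.mulVec, dotProduct, Finset.sum_mul]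
    exact Finset.sum_congr rfl fun j _ => by simp [A, Hf, ginv]; ring
  rw [e2, ← e1]; exact h2

theorem vf_sm {n : ℕ} {u : Pt n → ℝ} (hu : ContDiff ℝ (⊤ : ℕ∞) u) (hp : ∀ x, 0 < u x) : Sm (vf u) :=
  ContDiff.inv hu fun x => (hp x).ne'

theorem uv {n : ℕ} {u : Pt n → ℝ} (hp : ∀ x, 0 < u x) : u * vf u = fun _ => 1 := by
  funext x; simp [vf, (hp x).ne']

/-- derivative of the inverse metric -/
theorem pd_Hf {n : ℕ} {g : Pt n → Fin n → Fin n → ℝ} (hp : posdef g) (hs : smoothT g) (s i j : Fin n) :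
    pd s (Hf g i j) = - ∑ a, ∑ b, Hf g i a * pd s (Gf g a b) * Hf g b j := by
  have hG : ∀ i j, Sm (Gf g i j) := hs
  have hH := Hf_sm hp hs
  have h1 : ∀ a, ∑ b, (pd s (Gf g a b) * Hf g b j + Gf g a b * pd s (Hf g b j)) = 0 := by
    intro a
    have := congrArg (pd s) (GH hp a j)
    rw [pd_const, pd_sum _ (fun b => (hG a b).mul' (hH b j))] at this
    simp only [pd_mul (hG _ _) (hH _ _)] at this
    rw [this]; rfl
  have h2 : ∑ a, Hf g i a * ∑ b, (pd s (Gf g a b) * Hf g b j + Gf g a b * pd s (Hf g b j)) = 0 := by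
    simp [h1]
  have h3 : ∑ a, Hf g i a * ∑ b, Gf g a b * pd s (Hf g b j) = pd s (Hf g i j) := by
    simp only [Finset.mul_sum, ← mul_assoc]
    rw [Finset.sum_comm]
    simp only [← Finset.sum_mul, HG hp]
    funext x
    simp
  simp only [Finset.sum_add_distrib, mul_add] at h2
  rw [h3] at h2
  rw [eq_neg_of_add_eq_zero_right h2]
  simp only [Finset.mul_sum, ← mul_assoc]

theorem pd_vf {n : ℕ} {u : Pt n → ℝ} (hu : ContDiff ℝ (⊤ : ℕ∞) u) (hp : ∀ x, 0 < u x) (s : Fin n) :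
    pd s (vf u) = - (vf u * vf u * pd s u) := by
  have hv := vf_sm hu hp
  have := congrArg (pd s) (uv hp)
  rw [pd_const, pd_mul hu hv] at this
  have h2 : vf u * (pd s u * vf u + u * pd s (vf u)) = 0 := by rw [this]; funext x; simp
  have h3 : vf u * (pd s u * vf u + u * pd s (vf u)) = vf u * vf u * pd s u + (u * vf u) * pd s (vf u) := by ring
  rw [h3, uv hp] at h2
  have h4 : (fun _ : Pt n => (1:ℝ)) * pd s (vf u) = pd s (vf u) := by funext x; simp
  rw [h4] at h2
  exact eq_neg_of_add_eq_zero_right h2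


/-- zeroth and first order jets -/
def JS {n : ℕ} (g : Pt n → Fin n → Fin n → ℝ) (u : Pt n → ℝ) : Set (Pt n → ℝ) :=
  {p | (∃ i j, p = Gf g i j) ∨ (∃ i j, p = Hf g i j) ∨ p = u ∨ p = vf u ∨
    (∃ k i j, p = pd k (Gf g i j)) ∨ ∃ k, p = pd k u}

/-- the algebra of lower order expressions -/
noncomputable def JA {n : ℕ} (g : Pt n → Fin n → Fin n → ℝ) (u : Pt n → ℝ) : Subalgebra ℝ (Pt n → ℝ) :=
  Algebra.adjoin ℝ (JS g u)

/-- functions agreeing on `U` with a lower order expression -/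
noncomputable def LO {n : ℕ} (g : Pt n → Fin n → Fin n → ℝ) (u : Pt n → ℝ) (U : Set (Pt n)) :
    Subalgebra ℝ (Pt n → ℝ) where
  carrier := {p | ∃ a ∈ JA g u, ∀ x ∈ U, p x = a x}
  mul_mem' := by
    rintro p q ⟨a, ha, h⟩ ⟨b, hb, h'⟩
    exact ⟨a * b, mul_mem ha hb, fun x hx => by simp [h x hx, h' x hx]⟩
  add_mem' := by
    rintro p q ⟨a, ha, h⟩ ⟨b, hb, h'⟩
    exact ⟨a + b, add_mem ha hb, fun x hx => by simp [h x hx, h' x hx]⟩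
  algebraMap_mem' := fun c => ⟨_, (JA g u).algebraMap_mem c, fun x _ => rfl⟩

section
variable {n : ℕ} {g : Pt n → Fin n → Fin n → ℝ} {u : Pt n → ℝ} {U : Set (Pt n)}

theorem LO_of {p : Pt n → ℝ} (h : p ∈ JA g u) : p ∈ LO g u U := ⟨p, h, fun _ _ => rfl⟩

theorem LO_congr {p q : Pt n → ℝ} (h : q ∈ LO g u U) (e : ∀ x ∈ U, p x = q x) : p ∈ LO g u U := by
  obtain ⟨a, ha, h⟩ := h
  exact ⟨a, ha, fun x hx => (e x hx).trans (h x hx)⟩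

theorem mG (i j : Fin n) : Gf g i j ∈ JA g u := Algebra.subset_adjoin (Or.inl ⟨i, j, rfl⟩)
theorem mH (i j : Fin n) : Hf g i j ∈ JA g u := Algebra.subset_adjoin (Or.inr (Or.inl ⟨i, j, rfl⟩))
theorem mu : u ∈ JA g u := Algebra.subset_adjoin (Or.inr (Or.inr (Or.inl rfl)))
theorem mv : vf u ∈ JA g u := Algebra.subset_adjoin (Or.inr (Or.inr (Or.inr (Or.inl rfl))))
theorem mdG (k i j : Fin n) : pd k (Gf g i j) ∈ JA g u :=
  Algebra.subset_adjoin (Or.inr (Or.inr (Or.inr (Or.inr (Or.inl ⟨k, i, j, rfl⟩)))))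
theorem mdu (k : Fin n) : pd k u ∈ JA g u :=
  Algebra.subset_adjoin (Or.inr (Or.inr (Or.inr (Or.inr (Or.inr ⟨k, rfl⟩)))))

theorem mdH (hp : posdef g) (hs : smoothT g) (k i j : Fin n) : pd k (Hf g i j) ∈ JA g u := by
  rw [pd_Hf hp hs]
  exact neg_mem (sum_mem fun a _ => sum_mem fun b _ => mul_mem (mul_mem (mH _ _) (mdG _ _ _)) (mH _ _))

theorem mdv (hu : ContDiff ℝ (⊤ : ℕ∞) u) (hp : ∀ x, 0 < u x) (k : Fin n) : pd k (vf u) ∈ JA g u := by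
  rw [pd_vf hu hp]
  exact neg_mem (mul_mem (mul_mem mv mv) (mdu _))

/-- first derivative combination in the Christoffel symbols -/
noncomputable def Tf (g : Pt n → Fin n → Fin n → ℝ) (i j l : Fin n) : Pt n → ℝ :=
  pd i (Gf g j l) + pd j (Gf g i l) - pd l (Gf g i j)

noncomputable def Ch (g : Pt n → Fin n → Fin n → ℝ) (k i j : Fin n) : Pt n → ℝ :=
  (1 / 2 : ℝ) • ∑ l, Hf g k l * Tf g i j l

theorem chr_eq (x : Pt n) (k i j : Fin n) : chr g x k i j = Ch g k i j x := by
  simp [chr, Ch, Hf, Tf]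
  rfl

theorem mT (i j l : Fin n) : Tf g i j l ∈ JA g u := sub_mem (add_mem (mdG _ _ _) (mdG _ _ _)) (mdG _ _ _)

theorem mCh (k i j : Fin n) : Ch g k i j ∈ JA g u :=
  (JA g u).smul_mem (sum_mem fun l _ => mul_mem (mH _ _) (mT _ _ _)) _

theorem Tf_sm (hs : smoothT g) (i j l : Fin n) : Sm (Tf g i j l) := by
  have hG : ∀ i j, Sm (Gf g i j) := hs
  exact (((hG _ _).pd _).add' ((hG _ _).pd _)).sub' ((hG _ _).pd _)

theorem pd_Ch (hp : posdef g) (hs : smoothT g) (a k i j : Fin n) :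
    pd a (Ch g k i j) - (1 / 2 : ℝ) • ∑ l, Hf g k l * pd a (Tf g i j l) ∈ JA g u := by
  have hH := Hf_sm hp hs
  have hT := Tf_sm hs
  have : pd a (Ch g k i j) - (1 / 2 : ℝ) • ∑ l, Hf g k l * pd a (Tf g i j l) =
      (1 / 2 : ℝ) • ∑ l, pd a (Hf g k l) * Tf g i j l := by
    unfold Ch
    rw [pd_smul (Sm.sum' _ fun l => (hH k l).mul' (hT i j l)), pd_sum _ (fun l => (hH k l).mul' (hT i j l)),
      ← smul_sub, ← Finset.sum_sub_distrib]
    congr 1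
    refine Finset.sum_congr rfl fun l _ => ?_
    rw [pd_mul (hH k l) (hT i j l)]; ring
  rw [this]
  exact (JA g u).smul_mem (sum_mem fun l _ => mul_mem (mdH hp hs _ _ _) (mT _ _ _)) _

/-- top order part of Ricci -/
noncomputable def Xr (g : Pt n → Fin n → Fin n → ℝ) (i j : Fin n) : Pt n → ℝ :=
  ∑ l, (1 / 2 : ℝ) • ∑ m, Hf g l m * (pd l (pd i (Gf g j m)) - pd l (pd m (Gf g i j))
    - pd i (pd j (Gf g l m)) + pd j (pd m (Gf g i l)))

theorem ric_top (hp : posdef g) (hs : smoothT g) (i j : Fin n) :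
    (fun x => ric g x i j) - Xr g i j ∈ JA g u := by
  have hG : ∀ i j, Sm (Gf g i j) := hs
  have e1 : (fun x => ric g x i j) = ∑ l, (pd l (Ch g l i j) - pd j (Ch g l i l)
      + ∑ m, Ch g l m l * Ch g m i j - ∑ m, Ch g l m j * Ch g m i l) := by
    funext x
    simp only [ric, riem, chr_eq, Finset.sum_apply, Pi.add_apply, Pi.sub_apply, Pi.mul_apply]
  rw [e1, Xr, ← Finset.sum_sub_distrib]
  refine sum_mem fun l _ => ?_
  have hdT : ∀ a b c d, pd a (Tf g b c d) = pd a (pd b (Gf g c d)) + pd a (pd c (Gf g b d)) - pd a (pd d (Gf g b c)) := by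
    intro a b c d
    unfold Tf
    rw [pd_sub (((hG _ _).pd _).add' ((hG _ _).pd _)) ((hG _ _).pd _), pd_add ((hG _ _).pd _) ((hG _ _).pd _)]
  have e2 : (1 / 2 : ℝ) • ∑ m, Hf g l m * (pd l (pd i (Gf g j m)) - pd l (pd m (Gf g i j))
      - pd i (pd j (Gf g l m)) + pd j (pd m (Gf g i l))) =
      (1 / 2 : ℝ) • ∑ m, Hf g l m * pd l (Tf g i j m) - (1 / 2 : ℝ) • ∑ m, Hf g l m * pd j (Tf g i l m) := by
    rw [← smul_sub, ← Finset.sum_sub_distrib]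
    congr 1
    refine Finset.sum_congr rfl fun m _ => ?_
    rw [hdT, hdT, pd_comm (hG i m) l j, pd_comm (hG l m) i j]
    ring
  rw [e2]
  have h1 := pd_Ch (u := u) hp hs l l i j
  have h2 := pd_Ch (u := u) hp hs j l i l
  have h3 : ∑ m, Ch g l m l * Ch g m i j ∈ JA g u := sum_mem fun m _ => mul_mem (mCh _ _ _) (mCh _ _ _)
  have h4 : ∑ m, Ch g l m j * Ch g m i l ∈ JA g u := sum_mem fun m _ => mul_mem (mCh _ _ _) (mCh _ _ _)
  have := sub_mem (add_mem (sub_mem h1 h2) h3) h4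
  convert this using 1
  ring

/-- the gauge covector -/
noncomputable def Vc (g : Pt n → Fin n → Fin n → ℝ) (c : Fin n) : Pt n → ℝ :=
  ∑ i, ∑ j, Hf g i j * (pd i (Gf g j c) - (1 / 2 : ℝ) • pd c (Gf g i j))

theorem Vc_eq1 (hg : symT g) (c : Fin n) :
    Vc g c = (1 / 2 : ℝ) • ∑ i, ∑ j, Hf g i j * Tf g i j c := by
  have h1 : ∑ i, ∑ j, Hf g i j * pd i (Gf g j c) = ∑ i, ∑ j, Hf g i j * pd j (Gf g i c) := by
    rw [Finset.sum_comm]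
    refine Finset.sum_congr rfl fun i _ => Finset.sum_congr rfl fun j _ => ?_
    rw [Hf_symm hg]
  unfold Vc Tf
  simp only [mul_sub, mul_add, Finset.sum_add_distrib, Finset.sum_sub_distrib, ← h1, mul_smul_comm,
    ← Finset.smul_sum, smul_sub, smul_add]
  rw [← add_smul]; norm_num

theorem Vc_eq2 (hg : symT g) (hp : posdef g) (c : Fin n) :
    ∑ k, Gf g c k * ∑ i, ∑ j, Hf g i j * Ch g k i j = Vc g c := by
  rw [Vc_eq1 hg]
  unfold Ch
  have h1 : ∀ i j, ∑ k, Gf g c k * (Hf g i j * ((1 / 2 : ℝ) • ∑ l, Hf g k l * Tf g i j l)) =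
      (1 / 2 : ℝ) • (Hf g i j * Tf g i j c) := by
    intro i j
    have h2 : ∑ k, Gf g c k * ∑ l, Hf g k l * Tf g i j l = Tf g i j c := by
      simp only [Finset.mul_sum, ← mul_assoc]
      rw [Finset.sum_comm]
      simp only [← Finset.sum_mul, GH hp]
      funext x; simp
    conv_rhs => rw [← h2]
    rw [Finset.mul_sum, Finset.smul_sum]
    refine Finset.sum_congr rfl fun k _ => ?_
    rw [mul_smul_comm, mul_smul_comm]
    congr 1; ring
  simp only [Finset.mul_sum (s := Finset.univ) (f := fun i => ∑ j, _),
    Finset.smul_sum (s := Finset.univ) (f := fun i => ∑ j, Hf g i j * Tf g i j c)]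
  rw [Finset.sum_comm]
  refine Finset.sum_congr rfl fun i _ => ?_
  simp only [Finset.mul_sum (s := Finset.univ) (f := fun j => Hf g i j * _)]
  rw [Finset.sum_comm, Finset.smul_sum]
  exact Finset.sum_congr rfl fun j _ => h1 i j

theorem gauge_eq (hg : symT g) (hp : posdef g)
    (hsh : ∀ x ∈ U, ∀ k : Fin n,
      -(∑ i, ∑ j, ginv g x i j * chr g x k i j)
        + (u x)⁻¹ * ∑ i, ginv g x i k * pd i u x = 0) (c : Fin n) (x : Pt n) (hx : x ∈ U) :
    Vc g c x = (vf u * pd c u) x := by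
  have e2 : ∑ k, Gf g c k * (vf u * ∑ i, Hf g i k * pd i u) = vf u * pd c u := by
    have : ∀ k, Gf g c k * (vf u * ∑ i, Hf g i k * pd i u) = vf u * ∑ i, Gf g c k * Hf g k i * pd i u := by
      intro k
      simp only [Finset.mul_sum]
      refine Finset.sum_congr rfl fun i _ => ?_
      rw [Hf_symm hg i k]; ring
    simp only [this]
    rw [← Finset.mul_sum, Finset.sum_comm]
    simp only [← Finset.sum_mul, GH hp]
    congr 1
    funext x; simp
  rw [← e2, ← Vc_eq2 hg hp]
  simp only [Finset.sum_apply, Pi.mul_apply]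
  refine Finset.sum_congr rfl fun k _ => ?_
  congr 1
  have := hsh x hx k
  simp only [chr_eq] at this
  exact (neg_add_eq_zero.1 this)

/-- top order part of the differentiated gauge condition -/
noncomputable def Ec (g : Pt n → Fin n → Fin n → ℝ) (a c : Fin n) : Pt n → ℝ :=
  ∑ i, ∑ j, Hf g i j * (pd a (pd i (Gf g j c)) - (1 / 2 : ℝ) • pd a (pd c (Gf g i j)))

theorem pd_Vc (hp : posdef g) (hs : smoothT g) (a c : Fin n) : pd a (Vc g c) - Ec g a c ∈ JA g u := by
  have hG : ∀ i j, Sm (Gf g i j) := hs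
  have hH := Hf_sm hp hs
  have hq : ∀ i j, Sm (pd i (Gf g j c) - (1 / 2 : ℝ) • pd c (Gf g i j)) :=
    fun i j => ((hG _ _).pd _).sub' (((hG _ _).pd _).smul' _)
  have : pd a (Vc g c) - Ec g a c =
      ∑ i, ∑ j, pd a (Hf g i j) * (pd i (Gf g j c) - (1 / 2 : ℝ) • pd c (Gf g i j)) := by
    unfold Vc Ec
    rw [pd_sum _ (fun i => Sm.sum' _ fun j => (hH i j).mul' (hq i j)), ← Finset.sum_sub_distrib]
    refine Finset.sum_congr rfl fun i _ => ?_
    rw [pd_sum _ (fun j => (hH i j).mul' (hq i j)), ← Finset.sum_sub_distrib]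
    refine Finset.sum_congr rfl fun j _ => ?_
    rw [pd_mul (hH i j) (hq i j), pd_sub ((hG _ _).pd _) (((hG _ _).pd _).smul' _), pd_smul ((hG _ _).pd _)]
    ring
  rw [this]
  exact sum_mem fun i _ => sum_mem fun j _ => mul_mem (mdH hp hs _ _ _)
    (sub_mem (mdG _ _ _) ((JA g u).smul_mem (mdG _ _ _) _))

theorem Ec_LO (hU : IsOpen U) (hg : symT g) (hp : posdef g) (hs : smoothT g)
    (hu : ContDiff ℝ (⊤ : ℕ∞) u) (hup : ∀ x, 0 < u x)
    (hsh : ∀ x ∈ U, ∀ k : Fin n,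
      -(∑ i, ∑ j, ginv g x i j * chr g x k i j)
        + (u x)⁻¹ * ∑ i, ginv g x i k * pd i u x = 0) (a c : Fin n) :
    Ec g a c - vf u * pd a (pd c u) ∈ LO g u U := by
  have husm : Sm u := hu
  have h1 : pd a (Vc g c) - pd a (vf u * pd c u) ∈ LO g u U := by
    refine LO_congr (zero_mem _) fun x hx => ?_
    have : Vc g c =ᶠ[nhds x] vf u * pd c u := by
      filter_upwards [hU.mem_nhds hx] with y hy using gauge_eq hg hp hsh c y hy
    have := (pd_congr this a).self_of_nhds
    simp [this]
  have h2 : pd a (vf u * pd c u) = pd a (vf u) * pd c u + vf u * pd a (pd c u) :=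
    pd_mul (vf_sm hu hup) (husm.pd c) a
  have h3 : pd a (vf u) * pd c u ∈ LO g u U := LO_of (mul_mem (mdv hu hup a) (mdu c))
  have h4 : pd a (Vc g c) - Ec g a c ∈ LO g u U := LO_of (pd_Vc hp hs a c)
  have := add_mem (sub_mem h1 h4) h3
  convert this using 1
  rw [h2]; ring

/-- principal operator -/
noncomputable def Lop (g : Pt n → Fin n → Fin n → ℝ) (f : Pt n → ℝ) : Pt n → ℝ :=
  ∑ r, ∑ s, Hf g r s * pd r (pd s f)

theorem Xr_eq (hg : symT g) (hs : smoothT g) (i j : Fin n) :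
    Xr g i j = (1 / 2 : ℝ) • (Ec g i j + Ec g j i) - (1 / 2 : ℝ) • Lop g (Gf g i j) := by
  have hG : ∀ i j, Sm (Gf g i j) := hs
  unfold Xr Lop
  rw [← Finset.smul_sum, ← smul_sub]
  congr 1
  have h1 : ∑ l, ∑ m, Hf g l m * pd j (pd m (Gf g i l)) = ∑ l, ∑ m, Hf g l m * pd j (pd l (Gf g m i)) := by
    rw [Finset.sum_comm]
    refine Finset.sum_congr rfl fun l _ => Finset.sum_congr rfl fun m _ => ?_
    rw [Hf_symm hg, Gf_symm hg i m]
  have h2 : Ec g i j + Ec g j i = ∑ l, ∑ m, Hf g l m * pd l (pd i (Gf g j m)) +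
      ∑ l, ∑ m, Hf g l m * pd j (pd l (Gf g m i)) - ∑ l, ∑ m, Hf g l m * pd i (pd j (Gf g l m)) := by
    unfold Ec
    rw [← Finset.sum_add_distrib, ← Finset.sum_add_distrib, ← Finset.sum_sub_distrib]
    refine Finset.sum_congr rfl fun l _ => ?_
    rw [← Finset.sum_add_distrib, ← Finset.sum_add_distrib, ← Finset.sum_sub_distrib]
    refine Finset.sum_congr rfl fun m _ => ?_
    rw [pd_comm (hG m j) i l, Gf_symm hg m j, pd_comm (hG l m) j i]
    funext x
    simp; ring
  rw [h2, ← h1, ← Finset.sum_add_distrib, ← Finset.sum_sub_distrib, ← Finset.sum_sub_distrib]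
  refine Finset.sum_congr rfl fun l _ => ?_
  rw [← Finset.sum_add_distrib, ← Finset.sum_sub_distrib, ← Finset.sum_sub_distrib]
  refine Finset.sum_congr rfl fun m _ => ?_
  ring

theorem hess_eq (i j : Fin n) : (fun x => hess g u x i j) = pd j (pd i u) - ∑ k, Ch g k i j * pd k u := by
  funext x
  simp only [hess, cdCov, chr_eq, Pi.sub_apply, Finset.sum_apply, Pi.mul_apply]

theorem main_LO (hU : IsOpen U) (hg : symT g) (hp : posdef g) (hs : smoothT g)
    (hu : ContDiff ℝ (⊤ : ℕ∞) u) (hup : ∀ x, 0 < u x)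
    (hsh : ∀ x ∈ U, ∀ k : Fin n,
      -(∑ i, ∑ j, ginv g x i j * chr g x k i j)
        + (u x)⁻¹ * ∑ i, ginv g x i k * pd i u x = 0) (i j : Fin n) :
    -(fun x => ric g x i j) + vf u * (fun x => hess g u x i j) - (1 / 2 : ℝ) • Lop g (Gf g i j) ∈ LO g u U := by
  have husm : Sm u := hu
  have h1 : (fun x => ric g x i j) - Xr g i j ∈ LO g u U := LO_of (ric_top hp hs i j)
  have h2 := (LO g u U).smul_mem (Ec_LO hU hg hp hs hu hup hsh i j) (1 / 2 : ℝ)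
  have h3 := (LO g u U).smul_mem (Ec_LO hU hg hp hs hu hup hsh j i) (1 / 2 : ℝ)
  have h4 : vf u * ∑ k, Ch g k i j * pd k u ∈ LO g u U :=
    LO_of (mul_mem mv (sum_mem fun k _ => mul_mem (mCh _ _ _) (mdu _)))
  have := sub_mem (sub_mem (sub_mem (neg_mem h1) h2) h3) h4
  convert this using 1
  rw [hess_eq, Xr_eq hg hs, pd_comm husm i j]
  funext x
  simp; ring

theorem LG (hU : IsOpen U) (hg : symT g) (hp : posdef g) (hs : smoothT g)
    (hu : ContDiff ℝ (⊤ : ℕ∞) u) (hup : ∀ x, 0 < u x)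
    (hsv1 : ∀ x ∈ U, ∀ i j, ric g x i j = (u x)⁻¹ * hess g u x i j)
    (hsh : ∀ x ∈ U, ∀ k : Fin n,
      -(∑ i, ∑ j, ginv g x i j * chr g x k i j)
        + (u x)⁻¹ * ∑ i, ginv g x i k * pd i u x = 0) (i j : Fin n) :
    Lop g (Gf g i j) ∈ LO g u U := by
  have h1 : -(fun x => ric g x i j) + vf u * (fun x => hess g u x i j) ∈ LO g u U := by
    refine LO_congr (zero_mem _) fun x hx => ?_
    simp [hsv1 x hx i j, vf]
  have h2 := (LO g u U).smul_mem (sub_mem h1 (main_LO hU hg hp hs hu hup hsh i j)) (2 : ℝ)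
  convert h2 using 1
  rw [sub_sub_cancel, smul_smul]; norm_num

theorem Lu (hu : ContDiff ℝ (⊤ : ℕ∞) u) (hsv2 : ∀ x ∈ U, lapf g u x = 0) : Lop g u ∈ LO g u U := by
  have husm : Sm u := hu
  have h1 : (fun x => lapf g u x) ∈ LO g u U := LO_congr (zero_mem _) fun x hx => hsv2 x hx
  have h2 : ∑ i, ∑ j, Hf g i j * ∑ k, Ch g k i j * pd k u ∈ LO g u U :=
    LO_of (sum_mem fun i _ => sum_mem fun j _ => mul_mem (mH _ _) (sum_mem fun k _ => mul_mem (mCh _ _ _) (mdu _)))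
  have e : (fun x => lapf g u x) = ∑ i, ∑ j, Hf g i j * (pd j (pd i u) - ∑ k, Ch g k i j * pd k u) := by
    simp only [← hess_eq]
    funext x
    simp [lapf, Hf]
  convert add_mem h1 h2 using 1
  rw [e]
  simp only [mul_sub, Finset.sum_sub_distrib, sub_add_cancel]
  unfold Lop
  refine Finset.sum_congr rfl fun i _ => Finset.sum_congr rfl fun j _ => ?_
  rw [pd_comm husm]

theorem Lv (hp : posdef g) (hu : ContDiff ℝ (⊤ : ℕ∞) u) (hup : ∀ x, 0 < u x) (hsv2 : ∀ x ∈ U, lapf g u x = 0) :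
    Lop g (vf u) ∈ LO g u U := by
  have husm : Sm u := hu
  have hv := vf_sm hu hup
  have h1 := mul_mem (LO_of (U := U) (mul_mem (mv (g := g) (u := u)) mv)) (Lu hu hsv2)
  have h2 : ∑ r, ∑ s, Hf g r s * (pd r (vf u) * vf u * pd s u + vf u * pd r (vf u) * pd s u) ∈ LO g u U :=
    LO_of (sum_mem fun r _ => sum_mem fun s _ => mul_mem (mH _ _) (add_mem
      (mul_mem (mul_mem (mdv hu hup _) mv) (mdu _)) (mul_mem (mul_mem mv (mdv hu hup _)) (mdu _))))
  convert neg_mem (add_mem h1 h2) using 1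
  unfold Lop
  simp only [Finset.mul_sum]
  rw [← Finset.sum_add_distrib, ← Finset.sum_neg_distrib]
  refine Finset.sum_congr rfl fun r _ => ?_
  rw [← Finset.sum_add_distrib, ← Finset.sum_neg_distrib]
  refine Finset.sum_congr rfl fun s _ => ?_
  rw [pd_vf hu hup s, pd_neg, pd_mul (hv.mul' hv) (husm.pd s), pd_mul hv hv]
  ring

theorem sum4 {R : Type*} [AddCommMonoid R] (F : Fin n → Fin n → Fin n → Fin n → R) :
    ∑ a, ∑ b, ∑ r, ∑ s, F a b r s = ∑ r, ∑ s, ∑ a, ∑ b, F a b r s := by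
  have h : ∑ p : Fin n × Fin n, ∑ q : Fin n × Fin n, F p.1 p.2 q.1 q.2 =
      ∑ q : Fin n × Fin n, ∑ p : Fin n × Fin n, F p.1 p.2 q.1 q.2 := Finset.sum_comm
  simpa only [Fintype.sum_prod_type] using h

theorem LH (hp : posdef g) (hs : smoothT g) (hLG : ∀ i j, Lop g (Gf g i j) ∈ LO g u U) (i j : Fin n) :
    Lop g (Hf g i j) ∈ LO g u U := by
  have hG : ∀ i j, Sm (Gf g i j) := hs
  have hH := Hf_sm hp hs
  have h1 : ∑ a, ∑ b, (Hf g i a * Hf g b j) * Lop g (Gf g a b) ∈ LO g u U :=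
    sum_mem fun a _ => sum_mem fun b _ => mul_mem (LO_of (mul_mem (mH _ _) (mH _ _))) (hLG a b)
  have h2 : ∑ r, ∑ s, Hf g r s * ∑ a, ∑ b, (pd r (Hf g i a) * pd s (Gf g a b) * Hf g b j +
      Hf g i a * pd s (Gf g a b) * pd r (Hf g b j)) ∈ LO g u U :=
    LO_of (sum_mem fun r _ => sum_mem fun s _ => mul_mem (mH _ _) (sum_mem fun a _ => sum_mem fun b _ => add_mem
      (mul_mem (mul_mem (mdH hp hs _ _ _) (mdG _ _ _)) (mH _ _))
      (mul_mem (mul_mem (mH _ _) (mdG _ _ _)) (mdH hp hs _ _ _))))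
  have e1 : ∑ a, ∑ b, (Hf g i a * Hf g b j) * Lop g (Gf g a b) =
      ∑ r, ∑ s, Hf g r s * ∑ a, ∑ b, Hf g i a * Hf g b j * pd r (pd s (Gf g a b)) := by
    simp only [Lop, Finset.mul_sum]
    rw [sum4]
    refine Finset.sum_congr rfl fun r _ => Finset.sum_congr rfl fun s _ =>
      Finset.sum_congr rfl fun a _ => Finset.sum_congr rfl fun b _ => ?_
    ring
  convert neg_mem (add_mem h1 h2) using 1
  rw [e1]
  unfold Lop
  rw [← Finset.sum_add_distrib, ← Finset.sum_neg_distrib]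
  refine Finset.sum_congr rfl fun r _ => ?_
  rw [← Finset.sum_add_distrib, ← Finset.sum_neg_distrib]
  refine Finset.sum_congr rfl fun s _ => ?_
  have hsm : ∀ a b, Sm (Hf g i a * pd s (Gf g a b) * Hf g b j) :=
    fun a b => ((hH _ _).mul' ((hG _ _).pd _)).mul' (hH _ _)
  rw [pd_Hf hp hs s, pd_neg, pd_sum _ (fun a => Sm.sum' _ (hsm a)), ← mul_add, mul_neg]
  congr 2
  rw [← Finset.sum_add_distrib]
  refine Finset.sum_congr rfl fun a _ => ?_
  rw [pd_sum _ (hsm a), ← Finset.sum_add_distrib]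
  refine Finset.sum_congr rfl fun b _ => ?_
  rw [pd_mul ((hH _ _).mul' ((hG _ _).pd _)) (hH _ _), pd_mul (hH _ _) ((hG _ _).pd _)]
  ring

theorem JA_factor {a : Pt n → ℝ} (ha : a ∈ JA g u) :
    ∃ Φ : (Fin n → Fin n → ℝ) → (Fin n → Fin n → Fin n → ℝ) → ℝ → (Fin n → ℝ) → ℝ,
      ∀ x, a x = Φ (g x) (fun k a b => pd k (fun y => g y a b) x) (u x) (fun k => pd k u x) := by
  induction ha using Algebra.adjoin_induction with
  | mem s hs =>
    rcases hs with ⟨i, j, rfl⟩ | ⟨i, j, rfl⟩ | rfl | rfl | ⟨k, i, j, rfl⟩ | ⟨k, rfl⟩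
    · exact ⟨fun G _ _ _ => G i j, fun x => rfl⟩
    · exact ⟨fun G _ _ _ => (Matrix.of G)⁻¹ i j, fun x => rfl⟩
    · exact ⟨fun _ _ v _ => v, fun x => rfl⟩
    · exact ⟨fun _ _ v _ => v⁻¹, fun x => rfl⟩
    · exact ⟨fun _ D _ _ => D k i j, fun x => rfl⟩
    · exact ⟨fun _ _ _ d => d k, fun x => rfl⟩
  | algebraMap c => exact ⟨fun _ _ _ _ => c, fun x => rfl⟩
  | add f h _ _ ihf ihh =>
    obtain ⟨Φ, h1⟩ := ihf
    obtain ⟨Ψ, h2⟩ := ihh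
    exact ⟨fun a b c d => Φ a b c d + Ψ a b c d, fun x => by simp [h1, h2]⟩
  | mul f h _ _ ihf ihh =>
    obtain ⟨Φ, h1⟩ := ihf
    obtain ⟨Ψ, h2⟩ := ihh
    exact ⟨fun a b c d => Φ a b c d * Ψ a b c d, fun x => by simp [h1, h2]⟩

/-- the vector of unknowns -/
noncomputable def Wf (g : Pt n → Fin n → Fin n → ℝ) (u : Pt n → ℝ) :
    ((Fin n × Fin n) ⊕ (Fin n × Fin n)) ⊕ Bool → Pt n → ℝ
  | .inl (.inl p) => Gf g p.1 p.2
  | .inl (.inr p) => Hf g p.1 p.2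
  | .inr true => u
  | .inr false => vf u

theorem JA_le : JA g u ≤ Algebra.adjoin ℝ (Gen (Wf g u)) := by
  refine Algebra.adjoin_mono ?_
  rintro p (⟨i, j, rfl⟩ | ⟨i, j, rfl⟩ | rfl | rfl | ⟨k, i, j, rfl⟩ | ⟨k, rfl⟩)
  · exact Or.inl ⟨.inl (.inl (i, j)), rfl⟩
  · exact Or.inl ⟨.inl (.inr (i, j)), rfl⟩
  · exact Or.inl ⟨.inr true, rfl⟩
  · exact Or.inl ⟨.inr false, rfl⟩
  · exact Or.inr ⟨.inl (.inl (i, j)), k, rfl⟩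
  · exact Or.inr ⟨.inr true, k, rfl⟩

theorem final17 (hU : IsOpen U)
    (hgsym : symT g) (hgpos : posdef g) (hgsm : smoothT g)
    (husm : ContDiff ℝ (⊤ : ℕ∞) u) (hupos : ∀ x, 0 < u x)
    (hsv1 : ∀ x ∈ U, ∀ i j, ric g x i j = (u x)⁻¹ * hess g u x i j)
    (hsv2 : ∀ x ∈ U, lapf g u x = 0)
    (hsh : ∀ x ∈ U, ∀ k : Fin n,
      -(∑ i, ∑ j, ginv g x i j * chr g x k i j)
        + (u x)⁻¹ * ∑ i, ginv g x i k * pd i u x = 0) :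
    (∃ F : (Fin n → Fin n → ℝ) → (Fin n → Fin n → Fin n → ℝ) → ℝ →
        (Fin n → ℝ) → Fin n → Fin n → ℝ,
      ∀ x ∈ U, ∀ i j : Fin n,
        -(ric g x i j) + (u x)⁻¹ * hess g u x i j
          = (1/2) * (∑ r, ∑ s, ginv g x r s * pd2 r s (fun y => g y i j) x)
            + F (g x) (fun k a b => pd k (fun y => g y a b) x) (u x)
                (fun k => pd k u x) i j) ∧
    (∀ i j, AnalyticOnNhd ℝ (fun x => g x i j) U) ∧
    AnalyticOnNhd ℝ u U := by
  have hLG := LG hU hgsym hgpos hgsm husm hupos hsv1 hsh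
  have hall : ∀ A, Lop g (Wf g u A) ∈ LO g u U := by
    rintro ((p | p) | (_ | _))
    · exact hLG _ _
    · exact LH hgpos hgsm hLG _ _
    · exact Lv hgpos husm hupos hsv2
    · exact Lu husm hsv2
  choose f hf hfe using hall
  have hsm : ∀ A, Sm (Wf g u A) := by
    rintro ((p | p) | (_ | _))
    · exact hgsm _ _
    · exact Hf_sm hgpos hgsm _ _
    · exact vf_sm husm hupos
    · exact husm
  have han := analytic_main hsm hU (fun r s => .inl (.inr (r, s))) (fun r s => Hf_symm hgsym r s)
    (fun A => JA_le (hf A)) (fun x ξ hξ => Hf_pos hgpos x ξ hξ)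
    (fun A x hx => by
      rw [← hfe A x hx]
      simp only [Lop, Finset.sum_apply, Pi.mul_apply]
      rfl)
  refine ⟨?_, fun i j => han (.inl (.inl (i, j))), han (.inr true)⟩
  have hm := main_LO hU hgsym hgpos hgsm husm hupos hsh
  choose a ha hae using hm
  choose Φ hΦ using fun i j => JA_factor (ha i j)
  refine ⟨fun G D v d i j => Φ i j G D v d, fun x hx i j => ?_⟩
  have h1 := hae i j x hx
  simp only
  rw [← hΦ i j x, ← h1]
  simp only [Lop, Pi.sub_apply, Pi.add_apply, Pi.neg_apply, Pi.mul_apply, Pi.smul_apply, Finset.sum_apply,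
    smul_eq_mul, vf, Hf, pd2]
  have : ∀ r s, pd r (pd s (Gf g i j)) x = pd r (fun y => pd s (fun y => g y i j) y) x := fun _ _ => rfl
  simp only [this]
  ring
end

/-- in static-harmonic coordinates, the static vacuum system is
quasilinear elliptic with second-order part `(1/2) ḡ^{rs} ∂²ḡ_{ij}/∂x_r∂x_s`
(the remainder depending only on `ḡ, ∂ḡ, ū, ∂ū`), and consequently `ḡ` and `ū`
are real-analytic in such coordinates on the interior. -/
theorem statement17 {n : ℕ} (g : Pt n → Fin n → Fin n → ℝ) (u : Pt n → ℝ)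
    (U : Set (Pt n)) (hU : IsOpen U)
    (hgsym : symT g) (hgpos : posdef g) (hgsm : smoothT g)
    (husm : ContDiff ℝ (⊤ : ℕ∞) u) (hupos : ∀ x, 0 < u x)
    -- static vacuum: `Ric = ū⁻¹ ∇²ū` and `Δū = 0` on `U`
    (hsv1 : ∀ x ∈ U, ∀ i j, ric g x i j = (u x)⁻¹ * hess g u x i j)
    (hsv2 : ∀ x ∈ U, lapf g u x = 0)
    -- the coordinates are static-harmonic: `-Γ^k + ū⁻¹ ḡ^{ik} ∂_i ū = 0` on `U`
    (hsh : ∀ x ∈ U, ∀ k : Fin n,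
      -(∑ i, ∑ j, ginv g x i j * chr g x k i j)
        + (u x)⁻¹ * ∑ i, ginv g x i k * pd i u x = 0) :
    (∃ F : (Fin n → Fin n → ℝ) → (Fin n → Fin n → Fin n → ℝ) → ℝ →
        (Fin n → ℝ) → Fin n → Fin n → ℝ,
      ∀ x ∈ U, ∀ i j : Fin n,
        -(ric g x i j) + (u x)⁻¹ * hess g u x i j
          = (1/2) * (∑ r, ∑ s, ginv g x r s * pd2 r s (fun y => g y i j) x)
            + F (g x) (fun k a b => pd k (fun y => g y a b) x) (u x)
                (fun k => pd k u x) i j) ∧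
    (∀ i j, AnalyticOnNhd ℝ (fun x => g x i j) U) ∧
    AnalyticOnNhd ℝ u U := by
  exact final17 hU hgsym hgpos hgsm husm hupos hsv1 hsv2 hsh
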